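/- arXiv:0903.1442 — 8 statements merged into one kernel-verified Lean document; each statement's English description precedes it below -/
import Mathlib

section
/- If p is an exponential polynomial in n variables over ℂ and p(z) ≠ 0 for every z ∈ ℂⁿ, then there exists an exponential polynomial g in n variables over ℂ such that p(z) = exp(g(z)) for all z ∈ ℂⁿ. -/
/-- `IsExpPoly n p` says that `p : (Fin n → ℂ) → ℂ` belongs to the smallest subring of
the ring of functions `(Fin n → ℂ) → ℂ` containing all constant functions and all
coordinate projections, and closed under post-composition with the complex exponential. -/
inductive IsExpPoly (n : ℕ) : ((Fin n → ℂ) → ℂ) → Prop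
  | const (c : ℂ) : IsExpPoly n (fun _ => c)
  | coord (i : Fin n) : IsExpPoly n (fun z => z i)
  | add {f g : (Fin n → ℂ) → ℂ} : IsExpPoly n f → IsExpPoly n g → IsExpPoly n (f + g)
  | neg {f : (Fin n → ℂ) → ℂ} : IsExpPoly n f → IsExpPoly n (-f)
  | mul {f g : (Fin n → ℂ) → ℂ} : IsExpPoly n f → IsExpPoly n g → IsExpPoly n (f * g)
  | exp {f : (Fin n → ℂ) → ℂ} : IsExpPoly n f → IsExpPoly n (fun z => Complex.exp (f z))

namespace HR

open Metric Real

lemma one_var (a b ω : ℂ → ℂ) (hb : AnalyticOnNhd ℂ b Set.univ)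
    (hω : Differentiable ℂ ω) (h : ∀ t, a t = b t * Complex.exp (ω t)) (Λ : ℝ)
    (hb0 : b 0 ≠ 0)
    (ha : ∀ t, ‖t‖ ≤ 4 → ‖a t‖ ≤ Real.exp Λ) (hbb : ∀ t, ‖t‖ ≤ 4 → ‖b t‖ ≤ Real.exp Λ) :
    ∀ t, ‖t‖ ≤ 2 → (ω t).re ≤ 3 * (Λ - Real.log ‖b 0‖) := by
  intro t ht
  classical
  have ht4 : t ∈ ball (0:ℂ) 4 := by simp; linarith
  have hpos : Real.log ‖b 0‖ ≤ circleAverage (Real.log ‖b ·‖) 0 4 := by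
    rw [AnalyticOnNhd.circleAverage_log_norm (by norm_num) (fun x _ => hb x trivial) hb0]
    have : 0 ≤ ∑ᶠ u, (MeromorphicOn.divisor b (closedBall 0 |4|) u : ℝ) * Real.log (4 * ‖(0:ℂ) - u‖⁻¹) := by
      apply finsum_nonneg
      intro u
      by_cases hu : u ∈ closedBall (0:ℂ) |4|
      · apply mul_nonneg
        · have h1 : AnalyticOnNhd ℂ b (closedBall (0:ℂ) |4|) := fun x _ => hb x trivial
          exact_mod_cast (MeromorphicOn.AnalyticOnNhd.divisor_nonneg h1) u
        · rcases eq_or_ne u 0 with rfl | hu0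
          · simp
          · apply Real.log_nonneg
            have h2 : ‖u‖ ≤ 4 := by simpa using hu
            have h3 : 0 < ‖u‖ := norm_pos_iff.2 hu0
            rw [zero_sub, norm_neg, ← div_eq_mul_inv, le_div_iff₀ h3]; linarith
      · rw [Function.locallyFinsuppWithin.apply_eq_zero_of_notMem _ hu]; simp
    linarith
  have hint : CircleIntegrable (fun z => Λ - Real.log ‖b z‖) 0 4 := by
    apply CircleIntegrable.sub
    · exact circleIntegrable_const _ _ _
    · exact MeromorphicOn.circleIntegrable_log_norm (fun x _ => (hb x trivial).meromorphicAt)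
  set f₂ : ℂ → ℝ := fun z => if b z = 0 then max (ω z).re 0 else Λ - Real.log ‖b z‖ with hf₂
  have hcod : f₂ =ᶠ[Filter.codiscreteWithin (sphere (0:ℂ) |4|)] (fun z => Λ - Real.log ‖b z‖) := by
    have : b ⁻¹' {0}ᶜ ∈ Filter.codiscrete ℂ := by
      exact hb.preimage_zero_mem_codiscrete hb0
    have h2 := Filter.codiscreteWithin_mono (Set.subset_univ (sphere (0:ℂ) |4|)) this
    filter_upwards [h2] with z hz
    have : b z ≠ 0 := hz
    simp [hf₂, this]
  have hint2 : CircleIntegrable f₂ 0 4 := (circleIntegrable_congr_codiscreteWithin hcod).2 hint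
  have hle : ∀ z ∈ sphere (0:ℂ) |4|, max (ω z).re 0 ≤ f₂ z := by
    intro z hz
    have hz4 : ‖z‖ ≤ 4 := by
      have : ‖z‖ = 4 := by simpa using hz
      linarith
    simp only [hf₂]
    split_ifs with h0
    · exact le_rfl
    · have hbp : 0 < ‖b z‖ := norm_pos_iff.2 h0
      have h1 : Real.log ‖b z‖ ≤ Λ := (Real.log_le_iff_le_exp hbp).2 (hbb z hz4)
      have h2 : Real.log ‖b z‖ + (ω z).re ≤ Λ := by
        have := ha z hz4
        rw [h, norm_mul, Complex.norm_exp] at this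
        have h3 := Real.log_le_log (by positivity) this
        rwa [Real.log_mul hbp.ne' (Real.exp_pos _).ne', Real.log_exp, Real.log_exp] at h3
      apply max_le <;> linarith
  have hP := (hω.diffContOnCl (s := ball (0:ℂ) 4)).circleAverage_re_herglotzRieszKernel_smul ht4
  have hharm : InnerProductSpace.HarmonicOnNhd (fun z => (ω z).re) (closedBall (0:ℂ) 4) := by
    intro x _
    exact (hω.analyticAt x).harmonicAt_re
  have hP := hharm.circleAverage_re_herglotzRieszKernel_smul ht4
  have hcont : ContinuousOn (fun z => (ω z).re) (sphere (0:ℂ) |4|) :=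
    (Complex.continuous_re.comp hω.continuous).continuousOn
  have hk := (Complex.continuous_re.comp_continuousOn (continuousOn_herglotzRieszKernel_sphere ht4))
  have i1 : CircleIntegrable ((Complex.re ∘ herglotzRieszKernel 0 t) • (fun z => (ω z).re)) 0 4 :=
    ContinuousOn.circleIntegrable' (hk.smul hcont)
  have i2 : CircleIntegrable ((3:ℝ) • f₂) 0 4 := hint2.const_smul
  have key := circleAverage_mono i1 i2 (by
    intro z hz
    have hz' : z ∈ sphere (0:ℂ) 4 := by simpa using hz
    have u1 := re_herglotzRieszKernel_le hz' ht4
    have u2 := le_re_herglotzRieszKernel hz' ht4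
    have u3 := hle z hz
    simp only [Pi.smul_apply', Function.comp, herglotzRieszKernel_def, smul_eq_mul, Pi.smul_apply]
    set K := ((z - 0 + (t - 0)) / (z - 0 - (t - 0))).re
    have e1 : (4 + ‖t - 0‖) / (4 - ‖t - 0‖) ≤ 3 := by
      rw [sub_zero, div_le_iff₀ (by linarith)]; linarith
    have e2 : 0 ≤ (4 - ‖t - 0‖) / (4 + ‖t - 0‖) := by
      rw [sub_zero]; apply div_nonneg; linarith; positivity
    have u4 := le_max_left (ω z).re 0
    have u5 := le_max_right (ω z).re 0
    nlinarith)
  rw [hP, circleAverage_smul, circleAverage_congr_codiscreteWithin hcod (by norm_num)] at key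
  have : circleAverage (fun z => Λ - Real.log ‖b z‖) 0 4 = Λ - circleAverage (Real.log ‖b ·‖) 0 4 := by
    have := circleAverage_sub (f₁ := fun _ => Λ) (f₂ := (Real.log ‖b ·‖)) (c := 0) (R := 4) (circleIntegrable_const _ _ _) (MeromorphicOn.circleIntegrable_log_norm (fun x _ => (hb x trivial).meromorphicAt))
    rw [circleAverage_const] at this
    exact this
  rw [this, smul_eq_mul] at key
  linarith

noncomputable def LL (k N : ℕ) (r : ℝ) : ℝ := Real.exp^[k] ((r + 2) ^ (N + 1))

lemma LL_succ (k N : ℕ) (r : ℝ) : LL (k+1) N r = Real.exp (LL k N r) := by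
  simp [LL, Function.iterate_succ_apply']

lemma LL_zero (N : ℕ) (r : ℝ) : LL 0 N r = (r + 2) ^ (N + 1) := rfl

lemma LL_ge (k N : ℕ) {r : ℝ} (hr : 0 ≤ r) : (r+2)^(N+1) ≤ LL k N r := by
  induction k with
  | zero => exact le_rfl
  | succ k ih => rw [LL_succ]; linarith [Real.add_one_le_exp (LL k N r)]

lemma LL_two (k N : ℕ) {r : ℝ} (hr : 0 ≤ r) : 2 ≤ LL k N r := by
  refine le_trans ?_ (LL_ge k N hr)
  calc (2:ℝ) ≤ r + 2 := by linarith
    _ ≤ (r+2)^(N+1) := le_self_pow₀ (by linarith) (by omega)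

lemma LL_mono (k : ℕ) {N N' : ℕ} {r r' : ℝ} (hr : 0 ≤ r) (h : r ≤ r') (hN : N ≤ N') :
    LL k N r ≤ LL k N' r' := by
  induction k with
  | zero =>
    rw [LL_zero, LL_zero]
    calc (r+2)^(N+1) ≤ (r'+2)^(N+1) := by gcongr
      _ ≤ _ := pow_le_pow_right₀ (by linarith) (by omega)
  | succ k ih => rw [LL_succ, LL_succ]; exact Real.exp_le_exp.2 ih

lemma LL_sq (k N : ℕ) {r : ℝ} (hr : 0 ≤ r) : LL k N r ^ 2 ≤ LL k (2*N+1) r := by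
  induction k with
  | zero => rw [LL_zero, LL_zero, ← pow_mul]; apply le_of_eq; congr 1; ring
  | succ k ih =>
    rw [LL_succ, LL_succ, ← Real.exp_nat_mul]
    apply Real.exp_le_exp.2
    push_cast
    nlinarith [LL_two k N hr]

lemma exists_pow2 (C : ℝ) : ∃ M : ℕ, C ≤ 2 ^ M := by
  obtain ⟨M, hM⟩ := pow_unbounded_of_one_lt C (one_lt_two)
  exact ⟨M, hM.le⟩

lemma LL_const (k : ℕ) (C : ℝ) : ∃ N, ∀ r : ℝ, 0 ≤ r → C ≤ LL k N r := by
  obtain ⟨M, hM⟩ := exists_pow2 C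
  refine ⟨M, fun r hr => hM.trans ((le_trans ?_ (LL_ge k M hr)))⟩
  calc (2:ℝ)^M ≤ (r+2)^M := by gcongr; linarith
    _ ≤ _ := pow_le_pow_right₀ (by linarith) (by omega)

lemma LL_scale (k N : ℕ) (C : ℝ) (hC : 0 ≤ C) :
    ∃ N', ∀ r : ℝ, 0 ≤ r → LL k N (C * r + C) ≤ LL k N' r := by
  obtain ⟨M, hM⟩ := exists_pow2 (C+2)
  refine ⟨(M+1)*(N+1), fun r hr => ?_⟩
  induction k with
  | zero =>
    rw [LL_zero, LL_zero]
    calc (C * r + C + 2)^(N+1) ≤ ((r+2)^(M+1))^(N+1) := by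
          gcongr
          calc C * r + C + 2 ≤ (C+2) * (r+2) := by nlinarith
            _ ≤ 2^M * (r+2) := by gcongr
            _ ≤ (r+2)^M*(r+2) := by gcongr; linarith
            _ = _ := by ring
      _ = (r+2)^((M+1)*(N+1)) := by rw [← pow_mul]
      _ ≤ _ := pow_le_pow_right₀ (by linarith) (by omega)
  | succ k ih => rw [LL_succ, LL_succ]; exact Real.exp_le_exp.2 ih

lemma LL_mul (k N N' : ℕ) {r : ℝ} (hr : 0 ≤ r) : LL k N r * LL k N' r ≤ LL k (2*(N+N')+1) r := by
  refine le_trans ?_ (LL_sq k (N+N') hr)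
  rw [sq]
  have := LL_two k N hr
  have := LL_two k N' hr
  exact mul_le_mul (LL_mono k hr le_rfl (by omega)) (LL_mono k hr le_rfl (by omega)) (by linarith)
    (by linarith [LL_two k (N+N') hr])

lemma LL_add (k N N' : ℕ) {r : ℝ} (hr : 0 ≤ r) : LL k N r + LL k N' r ≤ LL k (2*(N+N')+1) r := by
  refine le_trans ?_ (LL_mul k N N' hr)
  nlinarith [LL_two k N hr, LL_two k N' hr]

def HH (n : ℕ) : ℕ → ((Fin n → ℂ) → ℂ) → Prop
  | 0, f => ∃ c, f = fun _ => c
  | k+1, f => AnalyticOnNhd ℂ f Set.univ ∧ ∃ N, ∀ z, ‖f z‖ ≤ LL k N ‖z‖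

variable {n : ℕ}

lemma HH.const (k : ℕ) (c : ℂ) : HH n k (fun _ => c) := by
  cases k with
  | zero => exact ⟨c, rfl⟩
  | succ k =>
    refine ⟨analyticOnNhd_const, ?_⟩
    obtain ⟨N, hN⟩ := LL_const k ‖c‖
    exact ⟨N, fun z => hN _ (norm_nonneg _)⟩

lemma HH.analytic {k : ℕ} {f : (Fin n → ℂ) → ℂ} (h : HH n k f) : AnalyticOnNhd ℂ f Set.univ := by
  cases k with
  | zero => obtain ⟨c, rfl⟩ := h; exact analyticOnNhd_const
  | succ k => exact h.1

lemma HH.succ {k : ℕ} {f : (Fin n → ℂ) → ℂ} (h : HH n k f) : HH n (k+1) f := by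
  cases k with
  | zero => obtain ⟨c, rfl⟩ := h; exact HH.const _ _
  | succ k =>
    obtain ⟨h1, N, hN⟩ := h
    refine ⟨h1, N, fun z => (hN z).trans ?_⟩
    rw [LL_succ]; linarith [Real.add_one_le_exp (LL k N ‖z‖)]

lemma HH.neg {k : ℕ} {f : (Fin n → ℂ) → ℂ} (h : HH n k f) : HH n k (-f) := by
  cases k with
  | zero => obtain ⟨c, rfl⟩ := h; exact ⟨-c, rfl⟩
  | succ k =>
    obtain ⟨h1, N, hN⟩ := h
    exact ⟨h1.neg, N, fun z => by simpa using hN z⟩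

lemma HH.add {k : ℕ} {f g : (Fin n → ℂ) → ℂ} (h : HH n k f) (h' : HH n k g) : HH n k (f + g) := by
  cases k with
  | zero => obtain ⟨c, rfl⟩ := h; obtain ⟨d, rfl⟩ := h'; exact ⟨c+d, rfl⟩
  | succ k =>
    obtain ⟨h1, N, hN⟩ := h
    obtain ⟨h2, N', hN'⟩ := h'
    exact ⟨h1.add h2, _, fun z => (norm_add_le _ _).trans ((add_le_add (hN z) (hN' z)).trans
      (LL_add k N N' (norm_nonneg z)))⟩

lemma HH.sub {k : ℕ} {f g : (Fin n → ℂ) → ℂ} (h : HH n k f) (h' : HH n k g) : HH n k (f - g) := by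
  rw [sub_eq_add_neg]; exact h.add h'.neg

lemma HH.mul {k : ℕ} {f g : (Fin n → ℂ) → ℂ} (h : HH n k f) (h' : HH n k g) : HH n k (f * g) := by
  cases k with
  | zero => obtain ⟨c, rfl⟩ := h; obtain ⟨d, rfl⟩ := h'; exact ⟨c*d, rfl⟩
  | succ k =>
    obtain ⟨h1, N, hN⟩ := h
    obtain ⟨h2, N', hN'⟩ := h'
    refine ⟨h1.mul h2, _, fun z => (norm_mul_le _ _).trans (le_trans ?_
      (LL_mul k N N' (norm_nonneg z)))⟩
    have := LL_two k N (norm_nonneg z)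
    exact mul_le_mul (hN z) (hN' z) (norm_nonneg _) (by linarith)

lemma HH.exp {k : ℕ} {f : (Fin n → ℂ) → ℂ} (h : HH n k f) :
    HH n (k+1) (fun z => Complex.exp (f z)) := by
  cases k with
  | zero => obtain ⟨c, rfl⟩ := h; exact HH.const _ _
  | succ k =>
    obtain ⟨h1, N, hN⟩ := h
    refine ⟨fun z hz => (h1 z hz).cexp, N, fun z => ?_⟩
    rw [LL_succ, Complex.norm_exp]
    exact Real.exp_le_exp.2 ((Complex.re_le_norm _).trans (hN z))

lemma HH.coord (k : ℕ) (i : Fin n) : HH n (k+1) (fun z => z i) := by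
  refine ⟨(ContinuousLinearMap.proj (R := ℂ) (φ := fun _ : Fin n => ℂ) i).analyticOnNhd _, 0, fun z => ?_⟩
  have := LL_ge k 0 (norm_nonneg z)
  have h2 := norm_le_pi_norm z i
  simp only [zero_add, pow_one] at this
  linarith

lemma line_analytic {f : (Fin n → ℂ) → ℂ} (h : AnalyticOnNhd ℂ f Set.univ) (z v : Fin n → ℂ) :
    AnalyticOnNhd ℂ (fun t : ℂ => f (z + t • v)) Set.univ := by
  intro t _
  have h1 : AnalyticAt ℂ (fun t : ℂ => z + t • v) t := by fun_prop
  exact AnalyticAt.fun_comp (g := f) (f := fun t : ℂ => z + t • v) (h (z + t • v) trivial) h1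

lemma line_deriv {f : (Fin n → ℂ) → ℂ} (h : AnalyticOnNhd ℂ f Set.univ) (z v : Fin n → ℂ) (t : ℂ) :
    HasDerivAt (fun t : ℂ => f (z + t • v)) (fderiv ℂ f (z + t • v) v) t := by
  have h1 : HasDerivAt (fun t : ℂ => z + t • v) v t := by
    simpa using ((hasDerivAt_id t).smul_const v).const_add z
  exact ((h (z + t • v) trivial).differentiableAt.hasFDerivAt).comp_hasDerivAt t h1

lemma HH.deriv {k : ℕ} {f : (Fin n → ℂ) → ℂ} (h : HH n (k+1) f) (v : Fin n → ℂ) :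
    HH n (k+1) (fun z => fderiv ℂ f z v) := by
  obtain ⟨h1, N, hN⟩ := h
  obtain ⟨N', hN'⟩ := LL_scale k N (1+‖v‖) (by positivity)
  refine ⟨?_, N', fun z => ?_⟩
  · intro z hz
    exact (ContinuousLinearMap.apply ℂ ℂ v).comp_analyticOnNhd h1.fderiv z hz
  · have hd := line_deriv h1 z v 0
    have hdiff : Differentiable ℂ (fun t : ℂ => f (z + t • v)) :=
      fun t => (line_analytic h1 z v t trivial).differentiableAt
    have := Complex.norm_deriv_le_of_forall_mem_sphere_norm_le (c := 0) (R := 1)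
      (C := LL k N' ‖z‖) one_pos hdiff.diffContOnCl (by
        intro t ht
        refine (hN _).trans ((LL_mono k (norm_nonneg _) ?_ le_rfl).trans (hN' _ (norm_nonneg z)))
        have ht' : ‖t‖ = 1 := by simpa using ht
        calc ‖z + t • v‖ ≤ ‖z‖ + ‖t • v‖ := norm_add_le _ _
          _ = ‖z‖ + ‖v‖ := by rw [norm_smul, ht', one_mul]
          _ ≤ _ := by nlinarith [norm_nonneg z, norm_nonneg v])
    rw [hd.deriv] at this
    simpa using this

lemma div_growth {A B w : (Fin n → ℂ) → ℂ} 
    (hB : AnalyticOnNhd ℂ B Set.univ) (hw : AnalyticOnNhd ℂ w Set.univ)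
    (hB0 : B ≠ 0) (h : ∀ z, A z = B z * Complex.exp (w z)) (Λ : ℝ → ℝ)
    (hΛ0 : ∀ r, 0 ≤ r → 0 ≤ Λ r) (hΛ : ∀ r s, 0 ≤ r → r ≤ s → Λ r ≤ Λ s)
    (hAb : ∀ z, ‖A z‖ ≤ Real.exp (Λ ‖z‖)) (hBb : ∀ z, ‖B z‖ ≤ Real.exp (Λ ‖z‖)) :
    ∃ C : ℝ, 0 ≤ C ∧ ∀ z, ‖w z‖ ≤ C * (Λ (C * ‖z‖ + C) + 1) := by
  obtain ⟨z0, hz0⟩ : ∃ z0, B z0 ≠ 0 := by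
    by_contra! hc; exact hB0 (funext hc)
  set C : ℝ := 6 + 6 * |Real.log ‖B z0‖| + 2 + 3 * ‖w z0‖ + 5 * ‖z0‖ with hC
  have e1 := abs_nonneg (Real.log ‖B z0‖)
  have e2 := norm_nonneg (w z0)
  have e3 := norm_nonneg z0
  refine ⟨C, by positivity, fun z => ?_⟩
  have e4 := norm_nonneg z
  set v := z - z0
  set lam := Λ (C * ‖z‖ + C) with hlam
  have hlam0 : 0 ≤ lam := hΛ0 _ (by positivity)
  have hb : ∀ t : ℂ, ‖t‖ ≤ 4 → Λ ‖z0 + t • v‖ ≤ lam := by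
    intro t ht
    apply hΛ _ _ (norm_nonneg _)
    calc ‖z0 + t • v‖ ≤ ‖z0‖ + ‖t‖ * ‖v‖ := (norm_add_le _ _).trans (by rw [norm_smul])
      _ ≤ ‖z0‖ + 4 * (‖z‖ + ‖z0‖) := by gcongr; exact norm_sub_le _ _
      _ ≤ C * ‖z‖ + C := by nlinarith
  have hdiff : Differentiable ℂ (fun t : ℂ => w (z0 + t • v)) :=
    fun t => (line_analytic hw z0 v t trivial).differentiableAt
  have h1 := one_var (fun t => A (z0 + t • v)) (fun t => B (z0 + t • v)) (fun t => w (z0 + t • v))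
    (line_analytic hB z0 v) hdiff (fun t => h _) lam (by simpa using hz0)
    (fun t ht => (hAb _).trans (Real.exp_le_exp.2 (hb t ht)))
    (fun t ht => (hBb _).trans (Real.exp_le_exp.2 (hb t ht)))
  simp only [zero_smul, add_zero] at h1
  have h2 := Complex.borelCaratheodory (M := 3 * (lam + |Real.log ‖B z0‖|) + 1) (R := 2) (z := 1)
    (by positivity) hdiff.differentiableOn (by
      intro t ht
      have := h1 t (by simpa using (le_of_lt (by simpa using ht : ‖t‖ < 2)))
      have h3 := neg_abs_le (Real.log ‖B z0‖)
      show (w (z0 + t • v)).re ≤ _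
      linarith) (by norm_num) (by simp)
  simp only [zero_smul, add_zero, one_smul, norm_one, v, add_sub_cancel] at h2
  nlinarith [mul_nonneg hlam0 e1, mul_nonneg hlam0 e2, mul_nonneg hlam0 e3]

lemma const_of_log {w : (Fin n → ℂ) → ℂ} (hw : AnalyticOnNhd ℂ w Set.univ) (C D : ℝ) (hC : 0 ≤ C)
    (hD : 0 ≤ D) (h : ∀ z, ‖w z‖ ≤ C * (D * Real.log (C * ‖z‖ + C + 2) + 1)) :
    ∃ c, w = fun _ => c := by
  refine ⟨w 0, funext fun z => ?_⟩
  have hdiff : Differentiable ℂ (fun t : ℂ => w (0 + t • z)) :=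
    fun t => (line_analytic hw 0 z t trivial).differentiableAt
  have hd0 : ∀ c, deriv (fun t : ℂ => w (0 + t • z)) c = 0 := by
    intro c
    set a := C * ‖z‖
    set b := C * ‖c‖ * ‖z‖ + C + 2
    have ha : 0 ≤ a := by positivity
    have hb : 0 < b := by positivity
    set K := C * (D * (2 * Real.sqrt (a + b)) + 1)
    have hK : 0 ≤ K := by positivity
    have key : ∀ S : ℝ, 1 ≤ S → ‖deriv (fun t : ℂ => w (0 + t • z)) c‖ ≤ K / S := by
      intro S hS
      have hS0 : 0 < S := by linarith
      have := Complex.norm_deriv_le_of_forall_mem_sphere_norm_le (c := c) (R := S^2)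
        (C := K * S) (by positivity) hdiff.diffContOnCl (by
          intro t ht
          refine (h _).trans ?_
          have ht1 : ‖t‖ ≤ ‖c‖ + S^2 := by
            have : ‖t - c‖ = S^2 := by simpa [dist_eq_norm] using ht
            calc ‖t‖ = ‖c + (t - c)‖ := by simp
              _ ≤ _ := by rw [← this]; exact norm_add_le _ _
          have ht2 : C * ‖0 + t • z‖ + C + 2 ≤ (a + b) * S^2 := by
            rw [zero_add, norm_smul]
            have : C * (‖t‖ * ‖z‖) ≤ C * ((‖c‖ + S^2) * ‖z‖) := by gcongr
            have hS2 : 1 ≤ S^2 := by nlinarith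
            have : b ≤ b * S^2 := by nlinarith
            simp only [a, b] at *
            nlinarith
          have hl : Real.log (C * ‖0 + t • z‖ + C + 2) ≤ 2 * Real.sqrt (a+b) * S := by
            calc _ ≤ Real.log ((a+b) * S^2) := Real.log_le_log (by positivity) ht2
              _ = 2 * Real.log (Real.sqrt (a+b) * S) := by
                rw [← Real.sqrt_sq hS0.le, ← Real.sqrt_mul (by positivity), Real.log_sqrt (by positivity),
                  Real.sqrt_sq hS0.le]
                ring
              _ ≤ 2 * (Real.sqrt (a+b) * S) := by
                have := Real.log_le_sub_one_of_pos (x := Real.sqrt (a+b) * S) (by positivity)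
                linarith
              _ = _ := by ring
          calc _ ≤ C * (D * (2 * Real.sqrt (a+b) * S) + S) := by gcongr
            _ = K * S := by simp only [K]; ring)
      refine this.trans (le_of_eq ?_)
      field_simp
    by_contra hne
    have hpos : 0 < ‖deriv (fun t : ℂ => w (0 + t • z)) c‖ := norm_pos_iff.2 hne
    set d := ‖deriv (fun t : ℂ => w (0 + t • z)) c‖
    have := key (K / d + 1) (by have : 0 ≤ K / d := by positivity
                                linarith)
    have h0 : 0 ≤ K / d := by positivity
    rw [le_div_iff₀ (by positivity)] at this
    have h1 : d * (K / d + 1) = K + d := by field_simp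
    linarith
  have := is_const_of_deriv_eq_zero hdiff hd0 1 0
  simpa using this

lemma HH.div {k : ℕ} {A B w : (Fin n → ℂ) → ℂ} (hA : HH n (k+1) A) (hB : HH n (k+1) B)
    (hw : AnalyticOnNhd ℂ w Set.univ) (hB0 : B ≠ 0) (h : ∀ z, A z = B z * Complex.exp (w z)) :
    HH n k w := by
  obtain ⟨hA1, N, hN⟩ := hA
  obtain ⟨hB1, N', hN'⟩ := hB
  have hN2 : ∀ z, ‖A z‖ ≤ LL k (N+N') ‖z‖ := fun z =>
    (hN z).trans (LL_mono k (norm_nonneg _) le_rfl (by omega))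
  have hN2' : ∀ z, ‖B z‖ ≤ LL k (N+N') ‖z‖ := fun z =>
    (hN' z).trans (LL_mono k (norm_nonneg _) le_rfl (by omega))
  clear hN hN'
  set M := N + N'
  cases k with
  | zero =>
    have e : ∀ r : ℝ, 0 ≤ r → Real.exp ((M+1:ℕ) * Real.log (r+2)) = LL 0 M r := by
      intro r hr
      rw [Real.exp_nat_mul, Real.exp_log (by linarith), LL_zero]
    obtain ⟨C, hC, hCw⟩ := div_growth hB1 hw hB0 h (fun r => (M+1:ℕ) * Real.log (r+2))
      (fun r hr => mul_nonneg (by positivity) (Real.log_nonneg (by linarith)))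
      (fun r s hr hs => by gcongr) (fun z => by rw [e _ (norm_nonneg _)]; exact hN2 z)
      (fun z => by rw [e _ (norm_nonneg _)]; exact hN2' z)
    exact const_of_log hw C (M+1:ℕ) hC (by positivity) hCw
  | succ k =>
    obtain ⟨C, hC, hCw⟩ := div_growth hB1 hw hB0 h (fun r => LL k M r)
      (fun r hr => by linarith [LL_two k M hr])
      (fun r s hr hs => LL_mono k hr hs le_rfl) (fun z => by rw [← LL_succ]; exact hN2 z)
      (fun z => by rw [← LL_succ]; exact hN2' z)
    refine ⟨hw, ?_⟩
    obtain ⟨N1, h1⟩ := LL_scale k M C hC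
    obtain ⟨N2, h2⟩ := LL_const k C
    obtain ⟨N3, h3⟩ := LL_const k 1
    refine ⟨_, fun z => (hCw z).trans (le_trans ?_ (LL_mul k N2 (2*(N1+N3)+1) (norm_nonneg z)))⟩
    have hz := norm_nonneg z
    have := LL_two k M (r := C * ‖z‖ + C) (by positivity)
    apply mul_le_mul (h2 _ hz) _ (by positivity) (by linarith [LL_two k N2 hz])
    refine le_trans ?_ (LL_add k N1 N3 hz)
    exact add_le_add (h1 _ hz) (h3 _ hz)

lemma prop_of_deriv {F G : (Fin n → ℂ) → ℂ} (hF : AnalyticOnNhd ℂ F Set.univ)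
    (hG : AnalyticOnNhd ℂ G Set.univ) (hG0 : G ≠ 0)
    (h : ∀ v z, G z * fderiv ℂ F z v = F z * fderiv ℂ G z v) :
    ∃ c : ℂ, ∀ z, F z = c * G z := by
  obtain ⟨z0, hz0⟩ : ∃ z0, G z0 ≠ 0 := by
    by_contra! hc; exact hG0 (funext hc)
  refine ⟨F z0 / G z0, fun z => ?_⟩
  set v := z - z0
  have hf := line_analytic hF z0 v
  have hg := line_analytic hG z0 v
  have hg0 : ∀ᶠ t in nhds (0:ℂ), G (z0 + t • v) ≠ 0 := by
    apply (hg 0 trivial).continuousAt.eventually_ne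
    simpa using hz0
  obtain ⟨ε, hε, hball⟩ := Metric.eventually_nhds_iff_ball.1 hg0
  have hd : ∀ t ∈ ball (0:ℂ) ε, HasDerivAt (fun t : ℂ => F (z0 + t • v) / G (z0 + t • v)) 0 t := by
    intro t ht
    have := (line_deriv hF z0 v t).div (line_deriv hG z0 v t) (hball t ht)
    refine this.congr_deriv ?_
    have e := h v (z0 + t • v)
    rw [div_eq_zero_iff]; left
    linear_combination e
  have hconst : ∀ t ∈ ball (0:ℂ) ε, F (z0 + t • v) / G (z0 + t • v) = F z0 / G z0 := by
    intro t ht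
    have := isOpen_ball.is_const_of_deriv_eq_zero (convex_ball (0:ℂ) ε).isPreconnected
      (fun t ht => (hd t ht).differentiableAt.differentiableWithinAt) (fun t ht => (hd t ht).deriv)
      ht (mem_ball_self hε)
    simpa using this
  have heq : (fun t : ℂ => F (z0 + t • v)) = fun t : ℂ => F z0 / G z0 * G (z0 + t • v) := by
    apply hf.eq_of_eventuallyEq (z₀ := 0) (fun t ht => analyticAt_const.mul (hg t ht))
    filter_upwards [ball_mem_nhds (0:ℂ) hε] with t ht
    rw [← hconst t ht]; exact (div_mul_cancel₀ _ (hball t ht)).symm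
  have := congrFun heq 1
  simpa [v] using this

lemma borel_indep (k : ℕ) (S : Finset ((Fin n → ℂ) → ℂ)) :
    ∀ (c : ((Fin n → ℂ) → ℂ) → ((Fin n → ℂ) → ℂ)),
    (∀ g ∈ S, HH n (k+1) g) → (∀ g ∈ S, HH n (k+1) (c g)) →
    (∀ g ∈ S, ∀ g' ∈ S, g ≠ g' → ¬ HH n k (g - g')) →
    (∀ z, ∑ g ∈ S, c g z * Complex.exp (g z) = 0) → ∀ g ∈ S, c g = 0 := by
  classical
  induction S using Finset.induction_on with
  | empty => intro c _ _ _ _ g hg; simp at hg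
  | insert g0 S hg0 ih =>
    intro c hS hc hp h
    simp only [Finset.mem_insert, forall_eq_or_imp] at hS hc
    have hp' : ∀ g ∈ S, ∀ g' ∈ S, g ≠ g' → ¬ HH n k (g - g') := fun g hg g' hg' =>
      hp g (Finset.mem_insert_of_mem hg) g' (Finset.mem_insert_of_mem hg')
    simp only [Finset.sum_insert hg0] at h
    have hc0 : c g0 = 0 := by
      by_contra hne
      have hzero : ∀ g ∈ S, c g = 0 := by
        have hD : ∀ v, ∀ g ∈ S, (c g0 * ((fun z => fderiv ℂ (c g) z v) + c g * (fun z => fderiv ℂ g z v))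
            - ((fun z => fderiv ℂ (c g0) z v) + c g0 * (fun z => fderiv ℂ g0 z v)) * c g) = 0 := by
          intro v
          apply ih _ hS.2 _ hp'
          · intro z
            have hder : ∀ g, HH n (k+1) g → HH n (k+1) (c g) → HasFDerivAt
                (fun z => c g z * Complex.exp (g z))
                (c g z • (Complex.exp (g z) • fderiv ℂ g z) + Complex.exp (g z) • fderiv ℂ (c g) z) z := by
              intro g h1 h2
              exact (h2.analytic z trivial).differentiableAt.hasFDerivAt.mul
                ((h1.analytic z trivial).differentiableAt.hasFDerivAt.cexp)
            have hs := (hder g0 hS.1 hc.1).add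
              (HasFDerivAt.fun_sum (u := S) fun g hg => hder g (hS.2 g hg) (hc.2 g hg))
            have h0 : (fun z => c g0 z * Complex.exp (g0 z)) +
                (fun z => ∑ g ∈ S, c g z * Complex.exp (g z)) = fun _ => 0 := funext h
            have e1 := hs.unique (by rw [h0]; exact hasFDerivAt_const 0 z)
            have e2 := congrArg (fun L => L v) e1
            simp only [ContinuousLinearMap.add_apply, ContinuousLinearMap.smul_apply,
              ContinuousLinearMap.sum_apply, smul_eq_mul, ContinuousLinearMap.zero_apply] at e2
            have e3 := h z
            simp only [Pi.sub_apply, Pi.mul_apply, Pi.add_apply]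
            have : ∀ g ∈ S, (c g0 z * ((fderiv ℂ (c g) z) v + c g z * (fderiv ℂ g z) v) -
                ((fderiv ℂ (c g0) z) v + c g0 z * (fderiv ℂ g0 z) v) * c g z) * Complex.exp (g z)
                = c g0 z * (c g z * (Complex.exp (g z) * (fderiv ℂ g z) v) +
                  Complex.exp (g z) * (fderiv ℂ (c g) z) v) -
                ((fderiv ℂ (c g0) z) v + c g0 z * (fderiv ℂ g0 z) v) * (c g z * Complex.exp (g z)) := by
              intro g _; ring
            rw [Finset.sum_congr rfl this, Finset.sum_sub_distrib, ← Finset.mul_sum, ← Finset.mul_sum]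
            linear_combination c g0 z * e2 - ((fderiv ℂ (c g0) z) v + c g0 z * (fderiv ℂ g0 z) v) * e3
          · intro g hg
            exact (hc.1.mul (((hc.2 g hg).deriv v).add ((hc.2 g hg).mul ((hS.2 g hg).deriv v)))).sub
              (((hc.1.deriv v).add (hc.1.mul (hS.1.deriv v))).mul (hc.2 g hg))
        intro g hg
        by_contra hgne
        have hw : HH n (k+1) (g - g0) := (hS.2 g hg).sub hS.1
        have hF : HasFDerivAt (𝕜 := ℂ) (c g) (fderiv ℂ (c g) 0) 0 :=
          ((hc.2 g hg).analytic 0 trivial).differentiableAt.hasFDerivAt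
        obtain ⟨r, hr⟩ := prop_of_deriv (F := fun z => c g z * Complex.exp ((g - g0) z)) (G := c g0)
          (fun z hz => ((hc.2 g hg).analytic z hz).mul (hw.analytic z hz).cexp) hc.1.analytic hne (by
            intro v z
            have d1 := ((hc.2 g hg).analytic z trivial).differentiableAt.hasFDerivAt
            have d2 := ((hS.2 g hg).analytic z trivial).differentiableAt.hasFDerivAt
            have d3 := (hS.1.analytic z trivial).differentiableAt.hasFDerivAt
            have d4 := d1.mul (d2.sub d3).cexp
            have d5 : fderiv ℂ (fun z => c g z * Complex.exp ((g - g0) z)) z = _ := d4.fderiv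
            rw [d5]
            have e := congrFun (hD v g hg) z
            simp only [Pi.sub_apply, Pi.mul_apply, Pi.add_apply, Pi.zero_apply] at e
            simp only [ContinuousLinearMap.add_apply, ContinuousLinearMap.smul_apply,
              ContinuousLinearMap.sub_apply, smul_eq_mul, Pi.sub_apply]
            linear_combination Complex.exp (g z - g0 z) * e)
        refine hp g (Finset.mem_insert_of_mem hg) g0 (Finset.mem_insert_self _ _)
          (fun h => hg0 (h ▸ hg)) ?_
        exact HH.div (A := (fun _ => r) * c g0) ((HH.const _ r).mul hc.1) (hc.2 g hg) hw.analytic hgne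
          (fun z => (hr z).symm)
      apply hne
      funext z
      have := h z
      rw [Finset.sum_eq_zero (fun g hg => by simp [hzero g hg]), add_zero] at this
      simpa using this
    intro g hg
    rcases Finset.mem_insert.1 hg with rfl | hg
    · exact hc0
    · exact ih c hS.2 hc.2 hp' (fun z => by simpa [hc0] using h z) g hg

lemma exists_log {p : (Fin n → ℂ) → ℂ} (hp : AnalyticOnNhd ℂ p Set.univ) (hnz : ∀ z, p z ≠ 0) :
    ∃ h : (Fin n → ℂ) → ℂ, AnalyticOnNhd ℂ h Set.univ ∧ ∀ z, p z = Complex.exp (h z) := by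
  have hcont : Continuous p := continuous_iff_continuousAt.2 fun z => (hp z trivial).continuousAt
  obtain ⟨F, ⟨_, hF⟩, _⟩ := Complex.isCoveringMapOn_exp.existsUnique_continuousMap_lifts
    (A := Fin n → ℂ) ⟨p, hcont⟩ (a₀ := 0) (e₀ := Complex.log (p 0)) (Complex.exp_log (hnz 0))
    (fun a => hnz a)
  have hF' : ∀ z, Complex.exp (F z) = p z := fun z => congrFun hF z
  refine ⟨F, fun z _ => ?_, fun z => (hF' z).symm⟩
  have h1 : AnalyticAt ℂ (fun y => Complex.log (p y / p z) + F z) z := by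
    apply AnalyticAt.add _ analyticAt_const
    apply AnalyticAt.clog ((hp z trivial).div analyticAt_const (hnz z))
    simp [div_self (hnz z)]
  refine h1.congr ?_
  have h2 : ∀ᶠ y in nhds z, ‖F y - F z‖ < Real.pi := by
    have : Filter.Tendsto (fun y => ‖F y - F z‖) (nhds z) (nhds 0) := by
      have : ContinuousAt (fun y => ‖F y - F z‖) z := by fun_prop
      simpa [ContinuousAt] using this
    exact this.eventually (gt_mem_nhds Real.pi_pos)
  filter_upwards [h2] with y hy
  rw [← hF', ← hF', ← Complex.exp_sub, Complex.log_exp, sub_add_cancel]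
  · have := (abs_le.1 (Complex.abs_im_le_norm (F y - F z))).1; linarith
  · have := (abs_le.1 (Complex.abs_im_le_norm (F y - F z))).2; linarith

def RR (n : ℕ) : ℕ → Subring ((Fin n → ℂ) → ℂ)
  | 0 => (Pi.constRingHom (Fin n → ℂ) ℂ).range
  | k+1 => Subring.closure ((RR n k : Set ((Fin n → ℂ) → ℂ)) ∪
      (fun f : (Fin n → ℂ) → ℂ => fun z => Complex.exp (f z)) '' (RR n k : Set ((Fin n → ℂ) → ℂ)) ∪
      Set.range (fun (i : Fin n) (z : Fin n → ℂ) => z i))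

lemma RR_succ {k : ℕ} {f : (Fin n → ℂ) → ℂ} (h : f ∈ RR n k) : f ∈ RR n (k+1) :=
  Subring.subset_closure (Or.inl (Or.inl h))

lemma RR_exp {k : ℕ} {f : (Fin n → ℂ) → ℂ} (h : f ∈ RR n k) :
    (fun z => Complex.exp (f z)) ∈ RR n (k+1) :=
  Subring.subset_closure (Or.inl (Or.inr ⟨f, h, rfl⟩))

lemma RR_coord (k : ℕ) (i : Fin n) : (fun z => z i) ∈ RR n (k+1) :=
  Subring.subset_closure (Or.inr ⟨i, rfl⟩)

lemma RR_le {k l : ℕ} (hkl : k ≤ l) {f : (Fin n → ℂ) → ℂ} (h : f ∈ RR n k) : f ∈ RR n l := by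
  induction hkl with
  | refl => exact h
  | step _ ih => exact RR_succ ih

lemma RR_of_isExpPoly {f : (Fin n → ℂ) → ℂ} (h : IsExpPoly n f) : ∃ k, f ∈ RR n k := by
  induction h with
  | const c => exact ⟨0, c, rfl⟩
  | coord i => exact ⟨1, RR_coord 0 i⟩
  | add _ _ h1 h2 =>
    obtain ⟨k, hk⟩ := h1
    obtain ⟨l, hl⟩ := h2
    exact ⟨max k l, add_mem (RR_le (le_max_left _ _) hk) (RR_le (le_max_right _ _) hl)⟩
  | neg _ h1 =>
    obtain ⟨k, hk⟩ := h1
    exact ⟨k, neg_mem hk⟩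
  | mul _ _ h1 h2 =>
    obtain ⟨k, hk⟩ := h1
    obtain ⟨l, hl⟩ := h2
    exact ⟨max k l, mul_mem (RR_le (le_max_left _ _) hk) (RR_le (le_max_right _ _) hl)⟩
  | exp _ h1 =>
    obtain ⟨k, hk⟩ := h1
    exact ⟨k+1, RR_exp hk⟩

lemma isExpPoly_of_RR {k : ℕ} : ∀ {f : (Fin n → ℂ) → ℂ}, f ∈ RR n k → IsExpPoly n f := by
  induction k with
  | zero => rintro f ⟨c, rfl⟩; exact IsExpPoly.const c
  | succ k ih =>
    intro f hf
    refine Subring.closure_induction ?_ (IsExpPoly.const 0) (IsExpPoly.const 1)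
      (fun _ _ _ _ h1 h2 => h1.add h2) (fun _ _ h => h.neg) (fun _ _ _ _ h1 h2 => h1.mul h2) hf
    rintro x ((hx | ⟨g, hg, rfl⟩) | ⟨i, rfl⟩)
    · exact ih hx
    · exact (ih hg).exp
    · exact IsExpPoly.coord i

lemma HH_of_RR {k : ℕ} : ∀ {f : (Fin n → ℂ) → ℂ}, f ∈ RR n k → HH n k f := by
  induction k with
  | zero => rintro f ⟨c, rfl⟩; exact HH.const _ c
  | succ k ih =>
    intro f hf
    refine Subring.closure_induction ?_ (HH.const _ 0) (HH.const _ 1)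
      (fun _ _ _ _ h1 h2 => h1.add h2) (fun _ _ h => h.neg) (fun _ _ _ _ h1 h2 => h1.mul h2) hf
    rintro x ((hx | ⟨g, hg, rfl⟩) | ⟨i, rfl⟩)
    · exact (ih hx).succ
    · exact (ih hg).exp
    · exact HH.coord _ i

lemma RR_sum {k : ℕ} {f : (Fin n → ℂ) → ℂ} (h : f ∈ RR n (k+2)) :
    f ∈ AddSubgroup.closure {f : (Fin n → ℂ) → ℂ | ∃ a ∈ RR n (k+1), ∃ g ∈ RR n (k+1),
      f = fun z => a z * Complex.exp (g z)} := by
  rw [RR, Subring.mem_closure_iff] at h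
  refine AddSubgroup.closure_mono ?_ h
  intro x hx
  refine Submonoid.closure_induction ?_ ?_ ?_ hx
  · rintro x ((hx | ⟨g, hg, rfl⟩) | ⟨i, rfl⟩)
    · exact ⟨x, hx, 0, zero_mem _, by simp⟩
    · exact ⟨1, one_mem _, g, hg, by simp⟩
    · exact ⟨_, RR_coord k i, 0, zero_mem _, by simp⟩
  · exact ⟨1, one_mem _, 0, zero_mem _, by funext z; simp⟩
  · rintro x y _ _ ⟨a, ha, g, hg, rfl⟩ ⟨b, hb, g', hg', rfl⟩
    refine ⟨a * b, mul_mem ha hb, g + g', add_mem hg hg', ?_⟩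
    funext z
    simp only [Pi.mul_apply, Pi.add_apply, Complex.exp_add]
    ring

def NF (n k : ℕ) (f : (Fin n → ℂ) → ℂ) : Prop :=
  ∃ (S : Finset ((Fin n → ℂ) → ℂ)) (c : ((Fin n → ℂ) → ℂ) → ((Fin n → ℂ) → ℂ)),
    (0 : (Fin n → ℂ) → ℂ) ∈ S ∧ (∀ g ∈ S, g ∈ RR n (k+1)) ∧ (∀ g ∈ S, c g ∈ RR n (k+1)) ∧
    (∀ g ∈ S, ∀ g' ∈ S, g ≠ g' → ¬ HH n k (g - g')) ∧
    ∀ z, f z = ∑ g ∈ S, c g z * Complex.exp (g z)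

lemma NF_add {k : ℕ} (gap : ∀ f, f ∈ RR n (k+1) → HH n k f → f ∈ RR n k)
    {a g y : (Fin n → ℂ) → ℂ} (ha : a ∈ RR n (k+1)) (hg : g ∈ RR n (k+1)) (hy : NF n k y) :
    NF n k ((fun z => a z * Complex.exp (g z)) + y) := by
  classical
  obtain ⟨S, c, h0, hS, hc, hp, hsum⟩ := hy
  by_cases hex : ∃ s ∈ S, HH n k (g - s)
  · obtain ⟨s, hs, hgs⟩ := hex
    have hgs' := RR_exp (gap _ (sub_mem hg (hS s hs)) hgs)
    refine ⟨S, Function.update c s (c s + a * fun z => Complex.exp ((g - s) z)), h0, hS, ?_, hp, ?_⟩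
    · intro t ht
      rcases eq_or_ne t s with rfl | hts
      · rw [Function.update_self]; exact add_mem (hc t ht) (mul_mem ha hgs')
      · rw [Function.update_of_ne hts]; exact hc t ht
    · intro z
      rw [Pi.add_apply, hsum z, ← Finset.add_sum_erase _ _ hs, ← Finset.add_sum_erase _ _ hs,
        Function.update_self]
      have : ∀ t ∈ S.erase s, Function.update c s (c s + a * fun z => Complex.exp ((g - s) z)) t z
          * Complex.exp (t z) = c t z * Complex.exp (t z) := by
        intro t ht
        rw [Function.update_of_ne (Finset.ne_of_mem_erase ht)]
      rw [Finset.sum_congr rfl this]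
      simp only [Pi.add_apply, Pi.mul_apply, Pi.sub_apply]
      have e : Complex.exp (g z) = Complex.exp (g z - s z) * Complex.exp (s z) := by
        rw [← Complex.exp_add, sub_add_cancel]
      rw [e]; ring
  · push Not at hex
    have hgS : g ∉ S := fun h => hex g h (by rw [sub_self]; exact HH.const k 0)
    refine ⟨insert g S, Function.update c g a, Finset.mem_insert_of_mem h0, ?_, ?_, ?_, ?_⟩
    · intro t ht
      rcases Finset.mem_insert.1 ht with rfl | ht
      · exact hg
      · exact hS t ht
    · intro t ht
      rcases Finset.mem_insert.1 ht with rfl | ht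
      · rw [Function.update_self]; exact ha
      · rw [Function.update_of_ne (ne_of_mem_of_not_mem ht hgS)]; exact hc t ht
    · intro t ht t' ht' hne
      rcases Finset.mem_insert.1 ht with rfl | h1 <;> rcases Finset.mem_insert.1 ht' with rfl | h2
      · exact absurd rfl hne
      · exact hex t' h2
      · intro hh; apply hex t h1; rw [← neg_sub]; exact hh.neg
      · exact hp t h1 t' h2 hne
    · intro z
      rw [Finset.sum_insert hgS, Function.update_self, Pi.add_apply, hsum z]
      congr 1
      apply Finset.sum_congr rfl
      intro t ht
      rw [Function.update_of_ne (ne_of_mem_of_not_mem ht hgS)]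

lemma NF_of_RR {k : ℕ} (gap : ∀ f, f ∈ RR n (k+1) → HH n k f → f ∈ RR n k)
    {f : (Fin n → ℂ) → ℂ} (h : f ∈ RR n (k+2)) : NF n k f := by
  refine AddSubgroup.closure_induction_left (p := fun x _ => NF n k x) ?_ ?_ ?_ (RR_sum h)
  · refine ⟨{0}, fun _ => 0, by simp, ?_, ?_, ?_, ?_⟩
    · intro g hg; rw [Finset.mem_singleton.1 hg]; exact zero_mem _
    · intro g hg; exact zero_mem _
    · intro g hg g' hg' hne
      exact absurd ((Finset.mem_singleton.1 hg).trans (Finset.mem_singleton.1 hg').symm) hne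
    · intro z; simp
  · rintro x ⟨a, ha, g, hg, rfl⟩ y _ hy
    exact NF_add gap ha hg hy
  · rintro x ⟨a, ha, g, hg, rfl⟩ y _ hy
    have := NF_add gap (neg_mem ha) hg hy
    convert this using 2
    funext z; simp

lemma gap (k : ℕ) : ∀ f, f ∈ RR n (k+1) → HH n k f → f ∈ RR n k := by
  classical
  induction k with
  | zero => rintro f - ⟨c, rfl⟩; exact ⟨c, rfl⟩
  | succ k ih =>
    intro f hf hH
    obtain ⟨S, c, h0, hS, hc, hp, hsum⟩ := NF_of_RR ih hf
    have key := borel_indep k S (Function.update c 0 (c 0 - f)) (fun g hg => HH_of_RR (hS g hg))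
      (by
        intro g hg
        rcases eq_or_ne g 0 with rfl | hne
        · rw [Function.update_self]; exact (HH_of_RR (hc _ hg)).sub hH
        · rw [Function.update_of_ne hne]; exact HH_of_RR (hc _ hg)) hp (by
        intro z
        have h1 := hsum z
        rw [← Finset.add_sum_erase _ _ h0] at h1 ⊢
        rw [Function.update_self]
        rw [Finset.sum_congr rfl (g := fun t => c t z * Complex.exp (t z)) (by
          intro t ht; rw [Function.update_of_ne (Finset.ne_of_mem_erase ht)])]
        simp only [Pi.zero_apply, Complex.exp_zero, mul_one, Pi.sub_apply] at h1 ⊢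
        linear_combination -h1) 0 h0
    rw [Function.update_self, sub_eq_zero] at key
    rw [← key]; exact hc 0 h0

lemma main_RR (k : ℕ) : ∀ p : (Fin n → ℂ) → ℂ, p ∈ RR n k → (∀ z, p z ≠ 0) →
    ∃ g, IsExpPoly n g ∧ ∀ z, p z = Complex.exp (g z) := by
  classical
  induction k with
  | zero =>
    rintro p ⟨c, rfl⟩ hnz
    exact ⟨fun _ => Complex.log c, IsExpPoly.const _, fun z => (Complex.exp_log (hnz z)).symm⟩
  | succ k ih =>
    intro p hp hnz
    have hpH := HH_of_RR hp
    obtain ⟨h, hh, hph⟩ := exists_log hpH.analytic hnz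
    have hhH : HH n k h := HH.div (B := fun _ => 1) hpH (HH.const _ 1) hh
      (fun h => one_ne_zero (congrFun h 0)) (fun z => by rw [one_mul]; exact hph z)
    cases k with
    | zero =>
      obtain ⟨c, rfl⟩ := hhH
      exact ⟨_, IsExpPoly.const c, hph⟩
    | succ k =>
      obtain ⟨S, c, h0, hS, hc, hpw, hsum⟩ := NF_of_RR (gap k) hp
      by_cases hex : ∃ s ∈ S, HH n k (h - s)
      · obtain ⟨s, hs, hhs⟩ := hex
        have key := borel_indep k S
          (Function.update c s (c s - fun z => Complex.exp ((h - s) z)))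
          (fun g hg => HH_of_RR (hS g hg)) (by
            intro g hg
            rcases eq_or_ne g s with rfl | hne
            · rw [Function.update_self]; exact (HH_of_RR (hc _ hg)).sub hhs.exp
            · rw [Function.update_of_ne hne]; exact HH_of_RR (hc _ hg)) hpw (by
            intro z
            have h1 := hsum z
            rw [← Finset.add_sum_erase _ _ hs] at h1 ⊢
            rw [Function.update_self]
            rw [Finset.sum_congr rfl (g := fun t => c t z * Complex.exp (t z)) (by
              intro t ht; rw [Function.update_of_ne (Finset.ne_of_mem_erase ht)])]
            rw [hph] at h1
            simp only [Pi.sub_apply]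
            have e : Complex.exp (h z) = Complex.exp (h z - s z) * Complex.exp (s z) := by
              rw [← Complex.exp_add, sub_add_cancel]
            rw [e] at h1
            linear_combination -h1) s hs
        rw [Function.update_self, sub_eq_zero] at key
        obtain ⟨g, hg, hgz⟩ := ih (c s) (hc s hs) (fun z => by rw [key]; exact Complex.exp_ne_zero _)
        refine ⟨g + s, hg.add (isExpPoly_of_RR (hS s hs)), fun z => ?_⟩
        rw [Pi.add_apply, Complex.exp_add, ← hgz, key, ← Complex.exp_add, hph]
        simp
      · push Not at hex
        exfalso
        have hhS : h ∉ S := fun hm => hex h hm (by rw [sub_self]; exact HH.const k 0)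
        have key := borel_indep k (insert h S) (Function.update c h (fun _ => -1)) (by
            intro t ht
            rcases Finset.mem_insert.1 ht with rfl | ht
            · exact hhH
            · exact HH_of_RR (hS t ht)) (by
            intro t ht
            rcases Finset.mem_insert.1 ht with rfl | ht
            · rw [Function.update_self]; exact HH.const _ _
            · rw [Function.update_of_ne (ne_of_mem_of_not_mem ht hhS)]; exact HH_of_RR (hc t ht)) (by
            intro t ht t' ht' hne
            rcases Finset.mem_insert.1 ht with rfl | h1 <;> rcases Finset.mem_insert.1 ht' with rfl | h2
            · exact absurd rfl hne
            · exact hex t' h2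
            · intro hh; apply hex t h1; rw [← neg_sub]; exact hh.neg
            · exact hpw t h1 t' h2 hne) (by
            intro z
            rw [Finset.sum_insert hhS, Function.update_self]
            rw [Finset.sum_congr rfl (g := fun t => c t z * Complex.exp (t z)) (by
              intro t ht; rw [Function.update_of_ne (ne_of_mem_of_not_mem ht hhS)])]
            rw [← hsum z, hph z]; ring) h (Finset.mem_insert_self _ _)
        rw [Function.update_self] at key
        have := congrFun key 0
        simp at this

end HR

theorem henson_rubel (n : ℕ) (p : (Fin n → ℂ) → ℂ) (hp : IsExpPoly n p)
    (hnz : ∀ z : Fin n → ℂ, p z ≠ 0) :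
    ∃ g : (Fin n → ℂ) → ℂ, IsExpPoly n g ∧ ∀ z : Fin n → ℂ, p z = Complex.exp (g z) := by
  obtain ⟨k, hk⟩ := HR.RR_of_isExpPoly hp
  exact HR.main_RR k p hk hnz
end

section
/- Let K be an algebraically closed field of characteristic 0, let α ≥ 1, let m_1, …, m_α be natural numbers, not all zero, whose greatest common divisor is 1, and let b ∈ K with b ≠ 0. Then the polynomial y_1^{m_1} ⋯ y_α^{m_α} − b is irreducible in the multivariate polynomial ring K[y_1, …, y_α]. -/
open MvPolynomial

theorem key_aux {K : Type*} [Field K] {α : ℕ} (m : Fin α →₀ ℕ) (hm : m ≠ 0)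
    (b : K) (hb : b ≠ 0) (f g : MvPolynomial (Fin α) K)
    (hfg : monomial m 1 - C b = f * g) (w : (Fin α →₀ ℕ) →+ ℤ) (hw : w m = 0) :
    ∀ d ∈ f.support, w d ≤ 0 := by
  classical
  have h0 : coeff 0 f * coeff 0 g = -b := by
    have := congrArg constantCoeff hfg
    rw [map_mul] at this
    simp only [constantCoeff_eq] at this
    rw [← this]
    simp [coeff_monomial, hm]
  have hf0 : (0 : Fin α →₀ ℕ) ∈ f.support := by
    rw [mem_support_iff]; intro h; rw [h, zero_mul] at h0
    exact hb (by simpa using h0.symm)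
  have hg0 : (0 : Fin α →₀ ℕ) ∈ g.support := by
    rw [mem_support_iff]; intro h; rw [h, mul_zero] at h0
    exact hb (by simpa using h0.symm)
  let D : (Fin α →₀ ℕ) → ℤ ×ₗ Lex (Fin α →₀ ℕ) := fun d => toLex (w d, toLex d)
  have hDadd : ∀ x y, D (x + y) = D x + D y := by
    intro x y
    simp only [D, map_add]
    rfl
  have hDinj : ∀ x y, D x = D y → x = y := by
    intro x y h
    have := congrArg (fun z => (ofLex z).2) h
    simpa [D] using this
  have hDle : ∀ x y, D x ≤ D y → w x ≤ w y := by
    intro x y h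
    have := (Prod.Lex.toLex_le_toLex.mp h)
    rcases this with h | h
    · exact le_of_lt h
    · exact le_of_eq h.1
  obtain ⟨d0, hd0, hd⟩ := Finset.exists_max_image f.support D ⟨0, hf0⟩
  obtain ⟨e0, he0, he⟩ := Finset.exists_max_image g.support D ⟨0, hg0⟩
  have hc : coeff (d0 + e0) (f * g) = coeff d0 f * coeff e0 g := by
    rw [coeff_mul]
    refine Finset.sum_eq_single (d0, e0) ?_ ?_
    · rintro ⟨x, y⟩ hxy hne
      by_contra hcon
      have hx : x ∈ f.support := mem_support_iff.mpr (left_ne_zero_of_mul hcon)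
      have hy : y ∈ g.support := mem_support_iff.mpr (right_ne_zero_of_mul hcon)
      have hs : x + y = d0 + e0 := by simpa using hxy
      have h1 := hd x hx
      have h2 := he y hy
      have h3 : D x + D y = D d0 + D e0 := by rw [← hDadd, ← hDadd, hs]
      have h4 : D x = D d0 := by
        by_contra h
        exact absurd h3 (ne_of_lt (add_lt_add_of_lt_of_le (lt_of_le_of_ne h1 h) h2))
      have h5 := hDinj _ _ h4
      subst h5
      exact hne (by rw [add_left_cancel hs])
    · intro h
      exact absurd (by simp) h
  have hne : coeff (d0 + e0) (f * g) ≠ 0 := by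
    rw [hc]
    exact mul_ne_zero (mem_support_iff.mp hd0) (mem_support_iff.mp he0)
  have hsum : w (d0 + e0) = 0 := by
    rw [← hfg, coeff_sub, coeff_monomial, coeff_C] at hne
    by_cases h1 : m = d0 + e0
    · rw [← h1, hw]
    · by_cases h2 : 0 = d0 + e0
      · rw [← h2, map_zero]
      · simp [h1, h2] at hne
  rw [map_add] at hsum
  have h2 := hDle _ _ (he 0 hg0)
  rw [map_zero] at h2
  intro d hd'
  have := hDle _ _ (hd d hd')
  omega

theorem supp_aux {K : Type*} [Field K] {α : ℕ} (m : Fin α →₀ ℕ) (hm : m ≠ 0)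
    (hgcd : Finset.univ.gcd m = 1)
    (b : K) (hb : b ≠ 0) (f g : MvPolynomial (Fin α) K)
    (hfg : monomial m 1 - C b = f * g) :
    ∀ d ∈ f.support, ∃ k : ℕ, d = k • m := by
  intro d hd
  have hle : ∀ i j, (m j : ℤ) * d i ≤ m i * d j := by
    intro i j
    let w : (Fin α →₀ ℕ) →+ ℤ :=
      { toFun := fun d => (m j : ℤ) * d i - m i * d j
        map_zero' := by simp
        map_add' := by intro x y; simp; ring }
    have := key_aux m hm b hb f g hfg w
      (by change (m j : ℤ) * m i - m i * m j = 0; ring) d hd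
    change (m j : ℤ) * d i - m i * d j ≤ 0 at this
    linarith
  have heq : ∀ i j, m j * d i = m i * d j := by
    intro i j
    have := le_antisymm (hle i j) (hle j i)
    exact_mod_cast this
  obtain ⟨j, hj⟩ := Finsupp.ne_iff.mp hm
  have hj : m j ≠ 0 := by simpa using hj
  have hdvd : m j ∣ d j := by
    have h : m j ∣ Finset.univ.gcd (fun i => d j * m i) :=
      Finset.dvd_gcd fun i _ => ⟨d i, by rw [heq i j, mul_comm]⟩
    rw [Finset.gcd_mul_left, hgcd] at h
    simpa using h
  obtain ⟨k, hk⟩ := hdvd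
  refine ⟨k, ?_⟩
  ext i
  have := heq i j
  rw [hk] at this
  apply Nat.eq_of_mul_eq_mul_left (Nat.pos_of_ne_zero hj)
  rw [this]; simp; ring

theorem unit_aux {K : Type*} [Field K] {α : ℕ} (m : Fin α →₀ ℕ)
    (f : MvPolynomial (Fin α) K) (hf0 : f ≠ 0)
    (h : ∀ d ∈ f.support, ∃ k : ℕ, d = k • m) (hu : ¬ IsUnit f) :
    m.degree ≤ f.totalDegree := by
  by_contra hlt
  apply hu
  have hC : f = C (coeff 0 f) := by
    ext d
    rw [coeff_C]
    split_ifs with h0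
    · rw [h0]
    · by_contra hd
      have hd' := mem_support_iff.mpr hd
      obtain ⟨k, rfl⟩ := h d hd'
      have h1 := le_totalDegree hd'
      change Finsupp.degree (k • m) ≤ _ at h1
      rw [map_nsmul] at h1
      rcases Nat.eq_zero_or_pos k with rfl | hk
      · simp at h0
      · have := Nat.le_mul_of_pos_left m.degree hk
        simp at h1
        omega
  rw [hC]
  apply IsUnit.map
  rw [isUnit_iff_ne_zero]
  intro h
  rw [h, C_0] at hC
  exact hf0 hC

theorem irreducible_prod_pow_sub_C
    (K : Type*) [Field K] [IsAlgClosed K] [CharZero K]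
    (α : ℕ) (hα : 1 ≤ α) (m : Fin α → ℕ) (hm : m ≠ 0)
    (hgcd : Finset.univ.gcd m = 1) (b : K) (hb : b ≠ 0) :
    Irreducible ((∏ i : Fin α, (X i : MvPolynomial (Fin α) K) ^ m i) - C b) := by
  classical
  obtain ⟨M, rfl⟩ : ∃ M : Fin α →₀ ℕ, m = M := ⟨Finsupp.equivFunOnFinite.symm m, by simp⟩
  have hM : M ≠ 0 := by rintro rfl; exact hm (by simp)
  have hp : (∏ i : Fin α, (X i : MvPolynomial (Fin α) K) ^ M i) = monomial M 1 := by
    rw [monomial_eq, C_1, one_mul, Finsupp.prod_fintype _ _ (by simp)]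
  rw [hp]
  have hcM : coeff M (monomial M 1 - C b : MvPolynomial (Fin α) K) = 1 := by
    simp [coeff_monomial, coeff_C, hM.symm]
  have hne : (monomial M 1 - C b : MvPolynomial (Fin α) K) ≠ 0 := by
    intro h; rw [h] at hcM; simp at hcM
  constructor
  · intro hu
    obtain ⟨r, -, hr⟩ := isUnit_iff_eq_C_of_isReduced.mp hu
    rw [hr] at hcM
    simp [coeff_C, hM.symm] at hcM
  · intro f g hfg
    by_contra! hcon
    have hfg0 := hne
    rw [hfg] at hfg0
    have hf0 := left_ne_zero_of_mul hfg0
    have hg0 := right_ne_zero_of_mul hfg0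
    have h1 := unit_aux M f hf0 (supp_aux M hM hgcd b hb f g hfg) hcon.1
    have h2 := unit_aux M g hg0
      (supp_aux M hM hgcd b hb g f (by rw [hfg, mul_comm])) hcon.2
    have h3 := totalDegree_mul_of_isDomain hf0 hg0
    have h4 : (f * g).totalDegree ≤ M.degree := by
      rw [← hfg]
      refine (totalDegree_sub_C_le _ _).trans ?_
      exact totalDegree_monomial_le _ _
    have h5 : M.degree ≠ 0 := by
      intro h; exact hM ((Finsupp.degree_eq_zero_iff M).mp h)
    omega
end

section
/- Let K be an algebraically closed field of characteristic 0, let α ≥ 1, let m_1, …, m_α be natural numbers, not all zero, with greatest common divisor m, and let b ∈ K with b ≠ 0. Then there exist m distinct elements c_1, …, c_m ∈ K with c_j^m = b for each j, and the polynomial y_1^{m_1} ⋯ y_α^{m_α} − b factors in K[y_1, …, y_α] as the product over j = 1, …, m of the polynomials y_1^{m_1/m} ⋯ y_α^{m_α/m} − c_j; moreover each such factor is irreducible in K[y_1, …, y_α]. -/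
open MvPolynomial

theorem aux_weight_le {σ K : Type*} [Field K] (w : (σ →₀ ℕ) → ℤ)
    (hw : ∀ a b, w (a + b) = w a + w b) (f g : MvPolynomial σ K)
    (hf : 0 ∈ f.support) (hg : 0 ∈ g.support)
    (hP : ∀ d ∈ (f * g).support, w d ≤ 0) : ∀ d ∈ f.support, w d ≤ 0 := by
  classical
  obtain ⟨a1, ha1, hma⟩ := Finset.exists_max_image f.support w ⟨0, hf⟩
  obtain ⟨b1, hb1, hmb⟩ := Finset.exists_max_image g.support w ⟨0, hg⟩
  have hw0 : w 0 = 0 := by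
    have := hw 0 0
    simp at this
    exact this
  obtain ⟨a0, ha0, b0, hb0, hu⟩ := UniqueSums.uniqueAdd_of_nonempty
    (A := f.support.filter (fun a => w a = w a1)) (B := g.support.filter (fun a => w a = w b1))
    ⟨a1, by simp [mem_support_iff.mp ha1]⟩ ⟨b1, by simp [mem_support_iff.mp hb1]⟩
  rw [Finset.mem_filter] at ha0 hb0
  have hu' : UniqueAdd f.support g.support a0 b0 := by
    intro a b ha hb hab
    have h1 := hma a ha
    have h2 := hmb b hb
    have h3 : w a + w b = w a0 + w b0 := by rw [← hw, ← hw, hab]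
    rw [ha0.2, hb0.2] at h3
    exact hu (Finset.mem_filter.mpr ⟨ha, by lia⟩) (Finset.mem_filter.mpr ⟨hb, by lia⟩) hab
  have hc : coeff (a0 + b0) (f * g) = coeff a0 f * coeff b0 g :=
    AddMonoidAlgebra.coeff_mul_add_of_uniqueAdd hu'
  have hmem : a0 + b0 ∈ (f * g).support := by
    rw [mem_support_iff, hc]
    exact mul_ne_zero (mem_support_iff.mp ha0.1) (mem_support_iff.mp hb0.1)
  have h1 := hP _ hmem
  rw [hw, ha0.2, hb0.2] at h1
  have h2 := hmb 0 hg
  intro d hd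
  have := hma d hd
  lia

theorem aux_totalDegree {K : Type*} [Field K] {α : ℕ} (n : Fin α → ℕ)
    (hn : Finset.univ.gcd n = 1) (f g : MvPolynomial (Fin α) K)
    (hf : 0 ∈ f.support) (hg : 0 ∈ g.support)
    (hP : ∀ d ∈ (f * g).support, d = 0 ∨ ∀ i, d i = n i) (hd : f.totalDegree ≠ 0) :
    ∑ i, n i ≤ f.totalDegree := by
  have key : ∀ d ∈ f.support, ∀ i, (∑ j, n j) * d i = n i * ∑ j, d j := by
    intro d hd i
    have h1 := aux_weight_le
      (fun d => (∑ j, (n j : ℤ)) * d i - n i * ∑ j, (d j : ℤ))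
      (by intro a b; simp [Finset.sum_add_distrib]; ring) f g hf hg
      (by
        intro e he
        rcases hP e he with rfl | h
        · simp
        · simp [h, mul_comm]) d hd
    have h2 := aux_weight_le
      (fun d => n i * ∑ j, (d j : ℤ) - (∑ j, (n j : ℤ)) * d i)
      (by intro a b; simp [Finset.sum_add_distrib]; ring) f g hf hg
      (by
        intro e he
        rcases hP e he with rfl | h
        · simp
        · simp [h, mul_comm]) d hd
    zify
    lia
  obtain ⟨d, hds, hd0⟩ : ∃ d ∈ f.support, d ≠ 0 := by
    by_contra! h
    apply hd
    rw [totalDegree_eq_zero_iff]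
    intro m hm x
    rw [h m hm]; rfl
  have hdeg : ∑ j, d j ≤ f.totalDegree := by
    have := le_totalDegree hds
    rwa [Finsupp.sum_fintype _ _ (fun _ => rfl)] at this
  refine le_trans (Nat.le_of_dvd ?_ ?_) hdeg
  · rw [Nat.pos_iff_ne_zero]
    intro h
    apply hd0
    ext i
    exact (Finset.sum_eq_zero_iff.mp h) i (Finset.mem_univ i)
  · have : (∑ j, n j) ∣ Finset.univ.gcd (fun i => (∑ j, d j) * n i) :=
      Finset.dvd_gcd (fun i _ => ⟨d i, by rw [key d hds i, mul_comm]⟩)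
    rwa [Finset.gcd_mul_left, hn, mul_one, normalize_eq] at this

theorem aux_irreducible {K : Type*} [Field K] {α : ℕ} (n : Fin α → ℕ)
    (hn : Finset.univ.gcd n = 1) (c : K) (hc : c ≠ 0) :
    Irreducible ((∏ i : Fin α, (X i : MvPolynomial (Fin α) K) ^ n i) - C c) := by
  classical
  have hmon : (∏ i : Fin α, (X i : MvPolynomial (Fin α) K) ^ n i)
      = monomial (Finsupp.equivFunOnFinite.symm n) 1 := by
    rw [monomial_eq, Finsupp.prod_fintype _ _ (fun _ => pow_zero _)]
    simp
  rw [hmon]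
  set ν := Finsupp.equivFunOnFinite.symm n with hν
  have hνi : ∀ i, ν i = n i := fun i => rfl
  obtain ⟨i0, hi0⟩ : ∃ i, n i ≠ 0 := by
    by_contra! h
    rw [Finset.gcd_eq_zero_iff.mpr (fun i _ => h i)] at hn
    exact zero_ne_one hn
  have hν0 : ν ≠ 0 := fun h => hi0 (by rw [← hνi, h]; rfl)
  have hS : 0 < ∑ i, n i := 
    lt_of_lt_of_le (Nat.pos_of_ne_zero hi0) (Finset.single_le_sum (fun _ _ => Nat.zero_le _) (Finset.mem_univ i0))
  have hco : ∀ d, coeff d (monomial ν (1 : K) - C c) =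
      (if ν = d then 1 else 0) - (if 0 = d then c else 0) := by
    intro d; rw [coeff_sub, coeff_monomial, coeff_C]
  have hsupp : ∀ d ∈ (monomial ν (1 : K) - C c).support, d = 0 ∨ ∀ i, d i = n i := by
    intro d hd
    rw [mem_support_iff, hco] at hd
    by_contra! h
    obtain ⟨h0, i, hi⟩ := h
    rw [if_neg (fun h => hi (by rw [← h, hνi])), if_neg (fun h => h0 h.symm)] at hd
    simp at hd
  have hdegP : (monomial ν (1 : K) - C c).totalDegree = ∑ i, n i := by
    apply le_antisymm
    · refine (totalDegree_sub_C_le _ _).trans ?_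
      rw [totalDegree_monomial _ one_ne_zero, Finsupp.sum_fintype _ _ (fun _ => rfl)]
      exact le_rfl
    · have : ν ∈ (monomial ν (1 : K) - C c).support := by
        rw [mem_support_iff, hco, if_pos rfl, if_neg (fun h => hν0 h.symm)]
        simp
      have := le_totalDegree this
      rwa [Finsupp.sum_fintype _ _ (fun _ => rfl)] at this
  have hc0 : coeff 0 (monomial ν (1 : K) - C c) = -c := by
    rw [hco, if_neg hν0]; simp
  refine ⟨?_, ?_⟩
  · rw [isUnit_iff_totalDegree_of_isReduced, hdegP]
    rintro ⟨_, h⟩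
    lia
  · intro f g hfg
    by_contra! h
    rw [hfg] at hsupp hdegP hc0
    have hfg0 : coeff 0 f * coeff 0 g ≠ 0 := by
      have : coeff 0 (f * g) = coeff 0 f * coeff 0 g := by
        simp only [← constantCoeff_eq, map_mul]
      rw [← this, hc0]
      exact neg_ne_zero.mpr hc
    have hf0 := left_ne_zero_of_mul hfg0
    have hg0 := right_ne_zero_of_mul hfg0
    have hfd : f.totalDegree ≠ 0 := fun h0 =>
      h.1 (isUnit_iff_totalDegree_of_isReduced.mpr ⟨hf0.isUnit, h0⟩)
    have hgd : g.totalDegree ≠ 0 := fun h0 =>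
      h.2 (isUnit_iff_totalDegree_of_isReduced.mpr ⟨hg0.isUnit, h0⟩)
    have h1 := aux_totalDegree n hn f g (mem_support_iff.mpr hf0) (mem_support_iff.mpr hg0)
      hsupp hfd
    have h2 := aux_totalDegree n hn g f (mem_support_iff.mpr hg0) (mem_support_iff.mpr hf0)
      (by rwa [mul_comm]) hgd
    rw [totalDegree_mul_of_isDomain (by rintro rfl; simp at hf0) (by rintro rfl; simp at hg0)]
      at hdegP
    lia

theorem prod_pow_sub_C_factorization
    (K : Type*) [Field K] [IsAlgClosed K] [CharZero K]
    (α : ℕ) (hα : 1 ≤ α) (mexp : Fin α → ℕ) (hmexp : mexp ≠ 0)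
    (m : ℕ) (hgcd : Finset.univ.gcd mexp = m) (b : K) (hb : b ≠ 0) :
    ∃ c : Fin m → K, Function.Injective c ∧ (∀ j, c j ^ m = b) ∧
      (∏ i : Fin α, (X i : MvPolynomial (Fin α) K) ^ mexp i) - C b =
        ∏ j : Fin m, ((∏ i : Fin α, (X i : MvPolynomial (Fin α) K) ^ (mexp i / m)) - C (c j)) ∧
      ∀ j : Fin m,
        Irreducible ((∏ i : Fin α, (X i : MvPolynomial (Fin α) K) ^ (mexp i / m)) - C (c j)) := by
  obtain ⟨i0, hi0⟩ : ∃ i, mexp i ≠ 0 := by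
    by_contra! h
    exact hmexp (funext h)
  have hm : m ≠ 0 := by
    rintro rfl
    exact hi0 (Finset.gcd_eq_zero_iff.mp hgcd i0 (Finset.mem_univ _))
  have hmpos : 0 < m := Nat.pos_of_ne_zero hm
  have hdvd : ∀ i, m ∣ mexp i := fun i => hgcd ▸ Finset.gcd_dvd (Finset.mem_univ i)
  have hg1 : Finset.univ.gcd (fun i => mexp i / m) = 1 := by
    subst hgcd
    exact Finset.gcd_div_eq_one (Finset.mem_univ i0) hi0
  haveI : NeZero (m : K) := ⟨Nat.cast_ne_zero.mpr hm⟩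
  obtain ⟨ζ, hζ⟩ := HasEnoughRootsOfUnity.exists_primitiveRoot K m
  obtain ⟨a, ha⟩ := IsAlgClosed.exists_pow_nat_eq b hmpos
  have ha0 : a ≠ 0 := by
    rintro rfl
    exact hb (by rw [← ha, zero_pow hm])
  have hpow : ∀ j : Fin m, (ζ ^ (j : ℕ) * a) ^ m = b := by
    intro j
    rw [mul_pow, ← pow_mul, mul_comm (j : ℕ), pow_mul, hζ.pow_eq_one, one_pow, one_mul, ha]
  refine ⟨fun j => ζ ^ (j : ℕ) * a, ?_, hpow, ?_, ?_⟩
  · intro i j hij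
    exact Fin.ext (hζ.pow_inj i.2 j.2 (mul_right_cancel₀ ha0 hij))
  · have h := congrArg (Polynomial.aeval
      (∏ i : Fin α, (X i : MvPolynomial (Fin α) K) ^ (mexp i / m)))
      (X_pow_sub_C_eq_prod hζ hmpos ha)
    simp only [map_sub, map_pow, Polynomial.aeval_X, Polynomial.aeval_C, map_prod] at h
    rw [← Finset.prod_pow] at h
    simp only [← pow_mul, Nat.div_mul_cancel (hdvd _), algebraMap_eq] at h
    rw [h, Finset.prod_range]
  · intro j
    refine aux_irreducible _ hg1 _ ?_
    intro h
    have := hpow j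
    simp only at h
    rw [h, zero_pow hm] at this
    exact hb this.symm
end

section
/- Let K be an algebraically closed field of characteristic 0, let α ≥ 1, let m_1, …, m_α be natural numbers, not all zero, with greatest common divisor m, and let b ∈ K with b ≠ 0. Suppose p ∈ K[y_1, …, y_α] is irreducible and every point a ∈ K^α with p(a) = 0 satisfies a_1^{m_1} ⋯ a_α^{m_α} = b. Then there exist k ∈ K with k ≠ 0 and c ∈ K with c^m = b such that p = k · (y_1^{m_1/m} ⋯ y_α^{m_α/m} − c). -/
open MvPolynomial

noncomputable def scaleHom {K : Type*} [Field K] {α : ℕ} (l : Fin α → K) :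
    MvPolynomial (Fin α) K →ₐ[K] MvPolynomial (Fin α) K :=
  aeval (fun i => C (l i) * X i)

theorem coeff_scaleHom {K : Type*} [Field K] {α : ℕ} (l : Fin α → K)
    (p : MvPolynomial (Fin α) K) (d : Fin α →₀ ℕ) :
    coeff d (scaleHom l p) = (∏ i, l i ^ d i) * coeff d p := by
  classical
  induction p using MvPolynomial.induction_on' with
  | monomial u a =>
    have h : scaleHom l (monomial u a) = C (∏ i, l i ^ u i) * monomial u a := by
      rw [scaleHom, aeval_monomial, Finsupp.prod_fintype _ _ (by simp)]
      simp only [mul_pow, Finset.prod_mul_distrib]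
      rw [monomial_eq (s := u), Finsupp.prod_fintype _ _ (by simp)]
      simp only [map_prod, map_pow, algebraMap_eq]
      ring
    rw [h, coeff_C_mul, coeff_monomial]
    split_ifs with hd
    · rw [hd]
    · simp
  | add p q hp hq => rw [map_add, coeff_add, hp, hq, coeff_add, mul_add]

theorem finite_assoc {M : Type*} [CommRing M] [IsDomain M] [UniqueFactorizationMonoid M]
    (y : M) (hy : y ≠ 0) (f : ℕ → M) (hf : ∀ k, f k ∣ y) :
    ∃ k l, k < l ∧ Associated (f k) (f l) := by
  have : Fintype { x : Associates M // x ∣ Associates.mk y } :=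
    UniqueFactorizationMonoid.fintypeSubtypeDvd _ (by simpa using hy)
  obtain ⟨a, b, hab, h⟩ := Finite.exists_ne_map_eq_of_infinite
    (fun k : ℕ => (⟨Associates.mk (f k), Associates.mk_dvd_mk.2 (hf k)⟩ :
      { x : Associates M // x ∣ Associates.mk y }))
  have h' : Associated (f a) (f b) := Associates.mk_eq_mk_iff_associated.1 (congrArg Subtype.val h)
  rcases lt_or_gt_of_ne hab with h1 | h1
  · exact ⟨a, b, h1, h'⟩
  · exact ⟨b, a, h1, h'.symm⟩

theorem scale_support {K : Type*} [Field K] {α : ℕ} (l : Fin α → K) (hl : ∀ i, l i ≠ 0)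
    (y p : MvPolynomial (Fin α) K) (hy : y ≠ 0) (hpy : p ∣ y) (h0 : coeff 0 p ≠ 0)
    (hfix : ∀ k : ℕ, scaleHom (fun i => l i ^ k) y = y)
    (d : Fin α →₀ ℕ) (hd : coeff d p ≠ 0) :
    ∃ N : ℕ, 0 < N ∧ (∏ i, l i ^ d i) ^ N = 1 := by
  obtain ⟨a, b, hab, u, hu⟩ := finite_assoc y hy (fun k => scaleHom (fun i => l i ^ k) p)
    (fun k => by
      have := map_dvd (scaleHom (fun i => l i ^ k)) hpy
      rwa [hfix k] at this)
  obtain ⟨c, hc, hcu⟩ := MvPolynomial.isUnit_iff_eq_C_of_isReduced.1 u.isUnit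
  rw [hcu, mul_comm] at hu
  have key : ∀ e, c * ((∏ i, l i ^ e i) ^ a * coeff e p) = (∏ i, l i ^ e i) ^ b * coeff e p := by
    intro e
    have := congrArg (coeff e) hu
    simp only [coeff_C_mul, coeff_scaleHom] at this
    simpa only [← Finset.prod_pow, ← pow_mul, mul_comm] using this
  have hc1 : c = 1 := by
    have := key 0
    simpa [h0] using this
  have hk := key d
  rw [hc1, one_mul] at hk
  have hk := mul_right_cancel₀ hd hk
  have hne : (∏ i, l i ^ d i) ≠ 0 := Finset.prod_ne_zero_iff.2 fun i _ => pow_ne_zero _ (hl i)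
  refine ⟨b - a, by omega, ?_⟩
  apply mul_left_cancel₀ (pow_ne_zero a hne)
  rw [← pow_add, mul_one, hk]
  congr 1; omega

theorem scale_fix {K : Type*} [Field K] {α : ℕ} (l : Fin α → K) (n : Fin α → ℕ)
    (h : ∏ i, l i ^ n i = 1) (c : K) (k : ℕ) :
    scaleHom (fun i => l i ^ k) ((∏ i, (X i : MvPolynomial (Fin α) K) ^ n i) - C c) =
      (∏ i, (X i : MvPolynomial (Fin α) K) ^ n i) - C c := by
  have : ∏ i, (l i ^ k) ^ n i = 1 := by
    simp_rw [← pow_mul, mul_comm k, pow_mul, Finset.prod_pow, h, one_pow]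
  simp only [scaleHom, map_sub, map_prod, map_pow, aeval_X, mul_pow, Finset.prod_mul_distrib]
  rw [← algebraMap_eq, AlgHom.commutes]
  congr 1
  simp only [algebraMap_eq, ← map_pow, ← map_prod, this, map_one, one_mul]

theorem prop_of_dvd {K : Type*} [Field K] [CharZero K] {α : ℕ} (n : Fin α → ℕ) (c : K)
    (p : MvPolynomial (Fin α) K)
    (hy : (∏ i, (X i : MvPolynomial (Fin α) K) ^ n i) - C c ≠ 0)
    (hpy : p ∣ (∏ i, (X i : MvPolynomial (Fin α) K) ^ n i) - C c) (h0 : coeff 0 p ≠ 0)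
    (d : Fin α →₀ ℕ) (hd : coeff d p ≠ 0) (i j : Fin α) : n i * d j = n j * d i := by
  rcases eq_or_ne i j with rfl | hij
  · rfl
  have h2 : (2 : K) ≠ 0 := two_ne_zero
  let l : Fin α → K := fun x => if x = i then 2 ^ n j else if x = j then (2 ^ n i)⁻¹ else 1
  have hprod : ∀ e : Fin α → ℕ, ∏ x, l x ^ e x = 2 ^ (n j * e i) * (2 ^ (n i * e j))⁻¹ := by
    intro e
    rw [← Finset.prod_subset (Finset.subset_univ {i, j}), Finset.prod_pair hij]
    · simp [l, hij.symm, pow_mul]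
    · intro x _ hx
      simp only [Finset.mem_insert, Finset.mem_singleton, not_or] at hx
      simp [l, hx.1, hx.2]
  have hl : ∀ x, l x ≠ 0 := by
    intro x
    simp only [l]
    split_ifs <;> simp
  obtain ⟨N, hN, h⟩ := scale_support l hl _ p hy hpy h0
    (fun k => scale_fix l n (by rw [hprod, mul_comm (n j)]; exact mul_inv_cancel₀ (by simp)) c k) d hd
  rw [hprod, mul_pow, inv_pow, mul_inv_eq_one₀ (by simp), ← pow_mul, ← pow_mul] at h
  have h' : (2:ℕ) ^ (n j * d i * N) = 2 ^ (n i * d j * N) := by exact_mod_cast h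
  have := Nat.pow_right_injective le_rfl h'
  exact (Nat.eq_of_mul_eq_mul_right hN this).symm

theorem irreducible_vanishing_on_monomial_hypersurface
    (K : Type*) [Field K] [IsAlgClosed K] [CharZero K]
    (α : ℕ) (hα : 1 ≤ α) (mexp : Fin α → ℕ) (hmexp : mexp ≠ 0)
    (m : ℕ) (hgcd : Finset.univ.gcd mexp = m) (b : K) (hb : b ≠ 0)
    (p : MvPolynomial (Fin α) K) (hp : Irreducible p)
    (hzero : ∀ a : Fin α → K, eval a p = 0 → ∏ i : Fin α, a i ^ mexp i = b) :
    ∃ k : K, k ≠ 0 ∧ ∃ c : K, c ^ m = b ∧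
      p = C k * ((∏ i : Fin α, (X i : MvPolynomial (Fin α) K) ^ (mexp i / m)) - C c) := by
  obtain ⟨i₀, hi₀⟩ := Function.ne_iff.1 hmexp
  have hdiv : ∀ i, m ∣ mexp i := fun i => hgcd ▸ Finset.gcd_dvd (Finset.mem_univ i)
  have hm : 0 < m := Nat.pos_of_ne_zero (by
    rintro rfl
    exact hi₀ (by simpa using hdiv i₀))
  have hg1 : Finset.univ.gcd (fun i => mexp i / m) = 1 := by
    rw [← hgcd]
    exact Finset.gcd_div_eq_one (Finset.mem_univ i₀) hi₀
  have hmul : ∀ i, mexp i / m * m = mexp i := fun i => Nat.div_mul_cancel (hdiv i)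
  generalize hn : (fun i => mexp i / m) = n at hg1
  have hn' : ∀ i, mexp i / m = n i := fun i => congrFun hn i
  simp only [hn'] at hmul ⊢
  have hni₀ : n i₀ ≠ 0 := by
    intro h
    have := hmul i₀
    rw [h, zero_mul] at this
    exact hi₀ this.symm
  set Y : MvPolynomial (Fin α) K := ∏ i, (X i : MvPolynomial (Fin α) K) ^ n i with hY
  have hprime : Prime p := hp.prime
  have hdvd1 : p ∣ Y ^ m - C b := by
    have hI : (Ideal.span {p}).IsPrime := (Ideal.span_singleton_prime hprime.ne_zero).2 hprime
    rw [← Ideal.mem_span_singleton, ← IsPrime.vanishingIdeal_zeroLocus (K := K) (Ideal.span {p})]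
    intro x hx
    have hx0 : eval x p = 0 := by
      have := hx p (Ideal.mem_span_singleton_self p)
      simpa [aeval_eq_eval] using this
    have := hzero x hx0
    simp only [hY, map_sub, map_pow, map_prod, aeval_X, aeval_C, ← Finset.prod_pow, ← pow_mul, hmul]
    rw [this]; simp
  obtain ⟨c, hcb, hdvd⟩ : ∃ c : K, c ^ m = b ∧ p ∣ Y - C c := by
    let f : Polynomial K := Polynomial.X ^ m - Polynomial.C b
    have hmon : f.Monic := Polynomial.monic_X_pow_sub_C b hm.ne'
    have hf : f = (f.roots.map fun a => Polynomial.X - Polynomial.C a).prod :=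
      (IsAlgClosed.splits f).eq_prod_roots_of_monic hmon
    have h1 : Polynomial.aeval Y f = Y ^ m - C b := by
      simp [f, algebraMap_eq]
    rw [← h1, hf, map_multiset_prod, Multiset.map_map] at hdvd1
    obtain ⟨c, hc, hd⟩ := hprime.exists_mem_multiset_map_dvd hdvd1
    refine ⟨c, ?_, by simpa [algebraMap_eq] using hd⟩
    have := (Polynomial.mem_roots'.1 hc).2
    simpa [f, sub_eq_zero] using this
  have hc0 : c ≠ 0 := by
    rintro rfl
    rw [zero_pow hm.ne'] at hcb
    exact hb hcb.symm
  have hYcoeff : constantCoeff Y = 0 := by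
    rw [hY, map_prod]
    exact Finset.prod_eq_zero (Finset.mem_univ i₀) (by simp [hni₀])
  have hyc : constantCoeff (Y - C c) ≠ 0 := by
    simp [hYcoeff, hc0]
  have hy : Y - C c ≠ 0 := by
    intro h; rw [h] at hyc; simp at hyc
  have h0 : coeff 0 p ≠ 0 := by
    intro h
    obtain ⟨q, hq⟩ := hdvd
    apply hyc
    rw [hq, map_mul, constantCoeff_eq, h, zero_mul]
  have hprop := prop_of_dvd n c p hy hdvd h0
  have hdeg : ∑ i, n i ≤ p.totalDegree := by
    have hne : p.totalDegree ≠ 0 := by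
      intro h
      rw [totalDegree_eq_zero_iff_eq_C] at h
      apply hp.not_isUnit
      rw [h]
      exact (IsUnit.mk0 _ h0).map C
    rw [Ne, totalDegree_eq_zero_iff] at hne
    push Not at hne
    obtain ⟨d, hd, x, hx⟩ := hne
    have hle := le_totalDegree hd
    rw [Finsupp.sum_fintype _ _ (by simp)] at hle
    refine le_trans (Finset.sum_le_sum fun j _ => ?_) hle
    have hdj : d j = n j * Finset.univ.gcd (fun i => d i) := by
      have e1 : Finset.univ.gcd (fun i => n i * d j) = Finset.univ.gcd (fun i => n j * d i) :=
        Finset.gcd_congr rfl fun i _ => hprop d (mem_support_iff.1 hd) i j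
      rw [Finset.gcd_mul_left, Finset.gcd_mul_right, hg1] at e1
      simpa using e1
    rw [hdj]
    apply Nat.le_mul_of_pos_right
    apply Nat.pos_of_ne_zero
    intro h
    exact hx (Finset.gcd_eq_zero_iff.1 h x (Finset.mem_univ x))
  obtain ⟨q, hq⟩ := hdvd
  have hq0 : q ≠ 0 := by rintro rfl; exact hy (by rw [hq, mul_zero])
  have hdegY : (Y - C c).totalDegree ≤ ∑ i, n i := by
    refine (totalDegree_sub_C_le _ _).trans ?_
    refine (totalDegree_finsetProd _ _).trans (Finset.sum_le_sum fun i _ => ?_)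
    rw [totalDegree_X_pow]
  rw [hq, totalDegree_mul_of_isDomain hp.ne_zero hq0] at hdegY
  have hqC := totalDegree_eq_zero_iff_eq_C.1 (show q.totalDegree = 0 by omega)
  generalize coeff 0 q = k at hqC
  have hk : k ≠ 0 := by rintro rfl; exact hq0 (by simpa using hqC)
  refine ⟨k⁻¹, inv_ne_zero hk, c, hcb, ?_⟩
  rw [hq, hqC, mul_left_comm, ← C_mul, inv_mul_cancel₀ hk, C_1, mul_one]
end

section
/- Let K be an algebraically closed field, let 1 ≤ r ≤ α, and let C = (c_{ij}) be an r × α matrix of integers whose rows are linearly independent over ℤ. Then the group homomorphism from (Kˣ)^α to (Kˣ)^r sending y = (y_1, …, y_α) to the tuple whose i-th coordinate is ∏_{j=1}^{α} y_j^{c_{ij}} is surjective; in particular, for every b ∈ (Kˣ)^r the system of equations ∏_{j=1}^{α} y_j^{c_{ij}} = b_i (i = 1, …, r) has a solution with all y_j nonzero. -/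
theorem gram_det_ne_zero_aux (r α : ℕ) (C : Fin r → Fin α → ℤ) (hC : LinearIndependent ℤ C) :
    ((Matrix.of C) * (Matrix.of C).transpose).det ≠ 0 := by
  intro h
  obtain ⟨v, hv, h0⟩ := Matrix.exists_mulVec_eq_zero_iff.2 h
  apply hv
  have h1 : dotProduct (Matrix.vecMul v (Matrix.of C)) (Matrix.vecMul v (Matrix.of C)) = 0 := by
    have h2 : dotProduct v (Matrix.mulVec (Matrix.of C * (Matrix.of C).transpose) v) = 0 := by
      rw [h0, dotProduct_zero]
    rw [← Matrix.mulVec_mulVec, Matrix.dotProduct_mulVec, Matrix.mulVec_transpose] at h2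
    exact h2
  rw [dotProduct_self_eq_zero] at h1
  rw [Fintype.linearIndependent_iff] at hC
  funext i
  refine hC v ?_ i
  funext j
  have := congrFun h1 j
  simpa [Matrix.vecMul, dotProduct] using this

theorem units_exists_zpow_aux (K : Type*) [Field K] [IsAlgClosed K] (d : ℤ) (hd : d ≠ 0)
    (b : Kˣ) : ∃ z : Kˣ, z ^ d = b := by
  have hn : 0 < d.natAbs := Int.natAbs_pos.2 hd
  obtain ⟨z, hz⟩ := IsAlgClosed.exists_pow_nat_eq (b : K) hn
  have hz0 : z ≠ 0 := by
    rintro rfl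
    rw [zero_pow hn.ne'] at hz
    exact b.ne_zero hz.symm
  have hu : (Units.mk0 z hz0) ^ d.natAbs = b := by
    ext
    simpa using hz
  rcases Int.natAbs_eq d with h | h
  · exact ⟨Units.mk0 z hz0, by rw [h, zpow_natCast]; exact hu⟩
  · exact ⟨(Units.mk0 z hz0)⁻¹, by rw [h, zpow_neg, inv_zpow, inv_inv, zpow_natCast]; exact hu⟩


theorem monomial_map_surjective
    (K : Type*) [Field K] [IsAlgClosed K]
    (r α : ℕ) (hr : 1 ≤ r) (hrα : r ≤ α)
    (C : Fin r → Fin α → ℤ) (hC : LinearIndependent ℤ C) :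
    Function.Surjective
      (fun (y : Fin α → Kˣ) (i : Fin r) => ∏ j : Fin α, y j ^ C i j) ∧
    ∀ b : Fin r → Kˣ, ∃ y : Fin α → Kˣ, ∀ i : Fin r, ∏ j : Fin α, y j ^ C i j = b i := by
  have key : ∀ b : Fin r → Kˣ, ∃ y : Fin α → Kˣ, ∀ i : Fin r,
      ∏ j : Fin α, y j ^ C i j = b i := by
    intro b
    have hd := gram_det_ne_zero_aux r α C hC
    set G := (Matrix.of C) * (Matrix.of C).transpose with hG
    choose z hz using fun i => units_exists_zpow_aux K G.det hd (b i)
    let D := (Matrix.of C).transpose * G.adjugate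
    have hD : Matrix.of C * D = G.det • (1 : Matrix (Fin r) (Fin r) ℤ) := by
      rw [← Matrix.mul_adjugate, ← Matrix.mul_assoc]
    refine ⟨fun j => ∏ k, z k ^ D j k, fun i => ?_⟩
    have e : ∀ k, ∑ j, D j k * C i j = if i = k then G.det else 0 := by
      intro k
      have := congrFun (congrFun hD i) k
      simpa [Matrix.mul_apply, Matrix.one_apply, mul_comm] using this
    have e2 : ∀ k, ∏ j, (z k ^ D j k) ^ C i j = if i = k then b i else 1 := by
      intro k
      have h3 : ∏ j, (z k ^ D j k) ^ C i j = z k ^ (∑ j, D j k * C i j) := by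
        simp only [← zpow_mul]
        exact (map_sum (zmultiplesHom (Additive Kˣ) (Additive.ofMul (z k)))
          (fun j => D j k * C i j) Finset.univ).symm
      rw [h3, e k]
      split_ifs with h
      · rw [h, hz]
      · rw [zpow_zero]
    simp only [← Finset.prod_zpow]
    rw [Finset.prod_comm]
    simp only [e2]
    simp
  exact ⟨fun b => (key b).imp fun y hy => funext hy, key⟩
end

section
/- Let K be an algebraically closed field of characteristic 0, let 1 ≤ r ≤ α, let C = (c_{ij}) be an r × α matrix of integers whose rows are linearly independent over ℤ, and let b_1, …, b_r be nonzero elements of K. Let R be the Laurent polynomial ring in α variables over K, realized as the group algebra of the additive group ℤ^α over K, and let I be the ideal of R generated by the r elements X^{C_i} − b_i, where C_i ∈ ℤ^α is the i-th row of C and X^{C_i} denotes the corresponding monomial (the group-algebra basis element at C_i). Then the Krull dimension of the quotient ring R / I equals α − r. -/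
lemma aux_dim_le_of_integral {A B : Type*} [CommRing A] [CommRing B] [Algebra A B]
    [Algebra.IsIntegral A B] : ringKrullDim B ≤ ringKrullDim A := by
  refine Order.krullDim_le_of_strictMono (PrimeSpectrum.comap (algebraMap A B)) ?_
  intro p q hpq
  have h : p.asIdeal < q.asIdeal := hpq
  exact Ideal.IsIntegral.comap_lt_comap h

lemma aux_lower (K : Type*) [Field K] (n : ℕ) :
    (n : WithBot ℕ∞) ≤ ringKrullDim (AddMonoidAlgebra K (Fin n → ℤ)) := by
  induction n with
  | zero => exact_mod_cast ringKrullDim_nonneg_of_nontrivial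
  | succ n ih =>
    let π : (Fin (n+1) → ℤ) →+ (Fin n → ℤ) :=
      { toFun := fun v i => v i.succ, map_zero' := rfl, map_add' := fun _ _ => rfl }
    have hπ : Function.Surjective π := fun w => ⟨Fin.cons 0 w, by ext i; simp [π]⟩
    have hne : (AddMonoidAlgebra.single (Pi.single 0 1 : Fin (n+1) → ℤ) (1:K) - 1) ≠ 0 := by
      intro h
      rw [sub_eq_zero, AddMonoidAlgebra.one_def] at h
      have h2 := congrArg (fun z => AddMonoidAlgebra.coeff z 0) h
      have h3 : (Pi.single 0 1 : Fin (n+1) → ℤ) ≠ 0 := by simp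
      simp [Finsupp.single_apply, h3] at h2
    have := ringKrullDim_succ_le_of_surjective (AddMonoidAlgebra.mapDomainRingHom K π)
      (by
        intro z
        induction z using AddMonoidAlgebra.induction_linear with
        | zero => exact ⟨0, map_zero _⟩
        | add x y hx hy =>
          obtain ⟨a, rfl⟩ := hx
          obtain ⟨b, rfl⟩ := hy
          exact ⟨a + b, map_add _ _ _⟩
        | single m k =>
          obtain ⟨g, rfl⟩ := hπ m
          exact ⟨AddMonoidAlgebra.single g k, by simp⟩) (mem_nonZeroDivisors_of_ne_zero hne)
      (by
        have : π (Pi.single 0 1) = 0 := by ext i; simp [π]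
        rw [map_sub, map_one, sub_eq_zero, AddMonoidAlgebra.one_def]
        simp [this])
    push_cast
    exact le_trans (by gcongr) this

lemma aux_upper {K : Type*} [Field K] {G Q : Type*} [AddCommGroup G] [CommRing Q] [Algebra K Q]
    (p : AddMonoidAlgebra K G →ₐ[K] Q) (hp : Function.Surjective p) {ι : Type*} (C : ι → G)
    (b : ι → K) (hb : ∀ i, b i ≠ 0)
    (hpC : ∀ i, p (AddMonoidAlgebra.single (C i) 1) = algebraMap K Q (b i))
    (n : ℕ) (D : Fin n → G) (hD : ∀ g, ∃ c : Fin n → ℤ, ∃ N : ℕ, 0 < N ∧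
      N • (g - ∑ j, c j • D j) ∈ Submodule.span ℤ (Set.range C)) :
    ringKrullDim Q ≤ n := by
  set x : G → Q := fun g => p (AddMonoidAlgebra.single g 1) with hx
  have x0 : x 0 = 1 := by simp only [hx]; rw [← AddMonoidAlgebra.one_def, map_one]
  have xadd : ∀ g h, x (g + h) = x g * x h := fun g h => by
    simp only [hx]; rw [← map_mul, AddMonoidAlgebra.single_mul_single, mul_one]
  have xneg : ∀ g, x g * x (-g) = 1 := fun g => by rw [← xadd, add_neg_cancel, x0]
  have xN : ∀ (N : ℕ) g, x (N • g) = x g ^ N := fun N g => by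
    induction N with
    | zero => simp [x0]
    | succ N ih => rw [succ_nsmul, xadd, ih, pow_succ]
  let f : MvPolynomial (Fin n) K →ₐ[K] Q := MvPolynomial.aeval fun j => x (D j) + x (-D j)
  letI : Algebra (MvPolynomial (Fin n) K) Q := f.toRingHom.toAlgebra
  have hK : ∀ k : K, IsIntegral (MvPolynomial (Fin n) K) (algebraMap K Q k) := fun k => by
    have : algebraMap K Q k = algebraMap (MvPolynomial (Fin n) K) Q (MvPolynomial.C k) := by
      change _ = f _
      simp [f]
    rw [this]
    exact isIntegral_algebraMap
  let H : AddSubgroup G :=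
    { carrier := {g | IsIntegral (MvPolynomial (Fin n) K) (x g) ∧
        IsIntegral (MvPolynomial (Fin n) K) (x (-g))}
      zero_mem' := by
        simp only [Set.mem_ofPred_eq, neg_zero, x0, and_self]
        exact isIntegral_one
      add_mem' := by
        rintro g h ⟨h1, h2⟩ ⟨h3, h4⟩
        refine ⟨?_, ?_⟩
        · rw [xadd]; exact h1.mul h3
        · rw [neg_add, xadd]; exact h2.mul h4
      neg_mem' := by
        rintro g ⟨h1, h2⟩
        exact ⟨h2, by rwa [neg_neg]⟩ }
  have hroot : ∀ (N : ℕ) g, 0 < N → N • g ∈ H → g ∈ H := by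
    rintro N g hN ⟨h1, h2⟩
    rw [← smul_neg, xN] at h2
    rw [xN] at h1
    exact ⟨h1.of_pow hN, h2.of_pow hN⟩
  have hC' : ∀ i, C i ∈ H := by
    intro i
    have e1 : x (C i) = algebraMap K Q (b i) := hpC i
    have e2 : x (- C i) = algebraMap K Q (b i)⁻¹ := by
      have h1 := xneg (C i)
      rw [e1] at h1
      have h2 : algebraMap K Q (b i)⁻¹ * algebraMap K Q (b i) = 1 := by
        rw [← map_mul, inv_mul_cancel₀ (hb i), map_one]
      calc x (- C i) = (algebraMap K Q (b i)⁻¹ * algebraMap K Q (b i)) * x (- C i) := by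
            rw [h2, one_mul]
        _ = _ := by rw [mul_assoc, h1, mul_one]
    exact ⟨e1 ▸ hK _, e2 ▸ hK _⟩
  have hquad : ∀ (j : Fin n) (u v : Q), u * v = 1 → u + v = x (D j) + x (-D j) →
      IsIntegral (MvPolynomial (Fin n) K) u := by
    intro j u v huv hs
    have hs' : algebraMap (MvPolynomial (Fin n) K) Q (MvPolynomial.X j) = u + v := by
      rw [hs]
      change f _ = _
      simp [f]
    refine ⟨Polynomial.X ^ 2 - (Polynomial.C (MvPolynomial.X j) * Polynomial.X - Polynomial.C 1), ?_, ?_⟩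
    · apply Polynomial.monic_X_pow_sub
      compute_degree
      norm_num
    · simp only [Polynomial.eval₂_sub, Polynomial.eval₂_mul, Polynomial.eval₂_pow,
        Polynomial.eval₂_X, Polynomial.eval₂_C, Polynomial.eval₂_one, map_one, hs']
      linear_combination -huv
  have hDH : ∀ j, D j ∈ H := fun j =>
    ⟨hquad j _ _ (xneg _) rfl, hquad j _ _ (by rw [mul_comm]; exact xneg _) (add_comm _ _)⟩
  have hspan : Submodule.span ℤ (Set.range C) ≤ AddSubgroup.toIntSubmodule H := by
    rw [Submodule.span_le]
    rintro _ ⟨i, rfl⟩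
    exact hC' i
  have hall : ∀ g, g ∈ H := by
    intro g
    obtain ⟨c, N, hN, h⟩ := hD g
    have h1 : g - ∑ j, c j • D j ∈ H := hroot N _ hN (hspan h)
    have h2 : ∑ j, c j • D j ∈ H := sum_mem fun j _ => zsmul_mem (hDH j) _
    simpa using add_mem h1 h2
  have hint : Algebra.IsIntegral (MvPolynomial (Fin n) K) Q := by
    refine ⟨fun q => ?_⟩
    obtain ⟨z, rfl⟩ := hp q
    induction z using AddMonoidAlgebra.induction_linear with
    | zero => rw [map_zero]; exact isIntegral_zero
    | add u v hu hv => rw [map_add]; exact hu.add hv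
    | single m k =>
      have : p (AddMonoidAlgebra.single m k) = algebraMap K Q k * x m := by
        rw [← Algebra.smul_def, ← map_smul]; simp
      rw [this]
      exact (hK k).mul (hall m).1
  refine (aux_dim_le_of_integral (A := MvPolynomial (Fin n) K)).trans ?_
  simp

lemma aux_char {K : Type*} [Field K] [IsAlgClosed K] {r : ℕ} {G : Type*} [AddCommGroup G]
    (C : Fin r → G) (hC : LinearIndependent ℤ C) (b : Fin r → K) (hb : ∀ i, b i ≠ 0) :
    ∃ χ : Multiplicative G →* K, ∀ i, χ (.ofAdd (C i)) = b i := by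
  letI : RootableBy Kˣ ℕ := rootableByOfPowLeftSurj _ _ (by
    intro n hn u
    obtain ⟨z, hz⟩ := IsAlgClosed.exists_pow_nat_eq (u : K) (Nat.pos_of_ne_zero hn)
    have hz0 : z ≠ 0 := by
      rintro rfl
      rw [zero_pow hn] at hz
      exact u.ne_zero hz.symm
    exact ⟨Units.mk0 z hz0, Units.ext (by simpa using hz)⟩)
  letI : RootableBy Kˣ ℤ := Group.rootableByIntOfRootableByNat _
  letI : DivisibleBy (Additive Kˣ) ℤ :=
    { div := fun a n => .ofMul (RootableBy.root a.toMul n)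
      div_zero := fun a => congrArg Additive.ofMul (RootableBy.root_zero a.toMul)
      div_cancel := fun a hn => congrArg Additive.ofMul (RootableBy.root_cancel a.toMul hn) }
  obtain ⟨h, hh⟩ := (Module.Baer.of_divisible (Additive Kˣ)).extension_property
    (Finsupp.linearCombination ℤ C) hC
    (Finsupp.linearCombination ℤ fun i => Additive.ofMul (Units.mk0 (b i) (hb i)))
  refine ⟨(Units.coeHom K).comp (AddMonoidHom.toMultiplicativeLeft h.toAddMonoidHom), fun i => ?_⟩
  have := LinearMap.congr_fun hh (Finsupp.single i 1)
  simp at this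
  simp [this]

lemma aux_proj {r α : ℕ} (C : Fin r → Fin α → ℤ) (hC : LinearIndependent ℤ C) :
    ∃ π : (Fin α → ℤ) →ₗ[ℤ] (Fin (α - r) → ℤ), Function.Surjective π ∧ (∀ i, π (C i) = 0) ∧
      ∀ g, π g = 0 → ∃ N : ℕ, 0 < N ∧ N • g ∈ Submodule.span ℤ (Set.range C) := by
  set L := Submodule.span ℤ (Set.range C) with hL
  let M := (Fin α → ℤ) ⧸ L
  let T := Submodule.torsion ℤ M
  have hrank : Module.finrank ℤ (M ⧸ T) = α - r := by
    have h1 : Module.finrank ℤ (M ⧸ T) = Module.finrank ℤ M :=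
      finrank_quotient_eq_of_le_torsion le_rfl
    have h2 := Submodule.finrank_quotient_add_finrank L
    rw [hL, finrank_span_eq_card hC, ← hL] at h2
    simp at h2
    rw [h1]
    change Module.finrank ℤ ((Fin α → ℤ) ⧸ L) = _
    omega
  haveI : Module.Free ℤ (M ⧸ T) := inferInstance
  let B := Module.finBasisOfFinrankEq ℤ (M ⧸ T) hrank
  refine ⟨B.equivFun.toLinearMap ∘ₗ T.mkQ ∘ₗ L.mkQ, ?_, ?_, ?_⟩
  · exact B.equivFun.surjective.comp ((Submodule.mkQ_surjective _).comp (Submodule.mkQ_surjective _))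
  · intro i
    have : L.mkQ (C i) = 0 := by
      simp only [Submodule.mkQ_apply, Submodule.Quotient.mk_eq_zero]
      exact Submodule.subset_span ⟨i, rfl⟩
    simp only [LinearMap.comp_apply, this, map_zero]
  · intro g hg
    simp only [LinearMap.comp_apply, LinearEquiv.coe_coe, LinearEquiv.map_eq_zero_iff] at hg
    rw [Submodule.mkQ_apply, Submodule.Quotient.mk_eq_zero, Submodule.mem_torsion_iff] at hg
    obtain ⟨a, ha⟩ := hg
    have ha0 : (a : ℤ) ≠ 0 := nonZeroDivisors.ne_zero a.2
    have h1 : (a : ℤ) • g ∈ L := by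
      rw [← Submodule.Quotient.mk_eq_zero]
      exact ha
    refine ⟨(a : ℤ).natAbs, Int.natAbs_pos.2 ha0, ?_⟩
    rw [← natCast_zsmul]
    rcases Int.natAbs_eq (a : ℤ) with h | h
    · rw [← h]; exact h1
    · rw [show (((a : ℤ).natAbs : ℕ) : ℤ) = -(a : ℤ) by omega, neg_smul]
      exact neg_mem h1

theorem krullDim_laurent_quotient_monomial_equations
    (K : Type*) [Field K] [IsAlgClosed K] [CharZero K]
    (r α : ℕ) (hr : 1 ≤ r) (hrα : r ≤ α)
    (C : Fin r → Fin α → ℤ) (hC : LinearIndependent ℤ C)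
    (b : Fin r → K) (hb : ∀ i, b i ≠ 0)
    (I : Ideal (AddMonoidAlgebra K (Fin α → ℤ)))
    (hI : I = Ideal.span (Set.range fun i : Fin r =>
      (AddMonoidAlgebra.single (C i) 1 : AddMonoidAlgebra K (Fin α → ℤ)) -
        algebraMap K (AddMonoidAlgebra K (Fin α → ℤ)) (b i))) :
    ringKrullDim (AddMonoidAlgebra K (Fin α → ℤ) ⧸ I) = (α - r : ℕ) := by
  obtain ⟨π, hπ, hπC, hπk⟩ := aux_proj C hC
  obtain ⟨χ, hχ⟩ := aux_char C hC b hb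
  apply le_antisymm
  · choose D hD using fun j : Fin (α - r) => hπ (Pi.single j 1)
    refine aux_upper (Ideal.Quotient.mkₐ K I) (Ideal.Quotient.mkₐ_surjective K I) C b hb ?_
      (α - r) D ?_
    · intro i
      have : algebraMap K (AddMonoidAlgebra K (Fin α → ℤ) ⧸ I) (b i) =
        Ideal.Quotient.mkₐ K I (algebraMap K (AddMonoidAlgebra K (Fin α → ℤ)) (b i)) :=
        ((Ideal.Quotient.mkₐ K I).commutes _).symm
      rw [this, Ideal.Quotient.mkₐ_eq_mk, Ideal.Quotient.eq, hI]
      exact Ideal.subset_span ⟨i, rfl⟩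
    · intro g
      refine ⟨π g, hπk _ ?_⟩
      rw [map_sub, map_sum]
      simp only [map_smul, hD]
      ext k
      simp [Finset.sum_apply, Pi.single_apply]
  · let F : Multiplicative (Fin α → ℤ) →* AddMonoidAlgebra K (Fin (α - r) → ℤ) :=
      { toFun := fun g => AddMonoidAlgebra.single (π g.toAdd) (χ g)
        map_one' := by simp [AddMonoidAlgebra.one_def]
        map_mul' := fun g h => by simp [AddMonoidAlgebra.single_mul_single] }
    let φ := AddMonoidAlgebra.lift K (AddMonoidAlgebra K (Fin (α - r) → ℤ)) (Fin α → ℤ) F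
    have hφs : ∀ g k, φ (AddMonoidAlgebra.single g k) =
        AddMonoidAlgebra.single (π g) (k * χ (.ofAdd g)) := fun g k => by
      simp [φ, F, AddMonoidAlgebra.lift_single]
    have hχ0 : ∀ g, χ g ≠ 0 := fun g h => by
      have h1 : χ (g * g⁻¹) = 1 := by rw [mul_inv_cancel, map_one]
      rw [map_mul, h, zero_mul] at h1
      exact zero_ne_one h1
    have hφ : Function.Surjective φ := by
      intro z
      induction z using AddMonoidAlgebra.induction_linear with
      | zero => exact ⟨0, map_zero _⟩
      | add x y hx hy =>
        obtain ⟨a, rfl⟩ := hx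
        obtain ⟨b, rfl⟩ := hy
        exact ⟨a + b, map_add _ _ _⟩
      | single m k =>
        obtain ⟨g, rfl⟩ := hπ m
        refine ⟨AddMonoidAlgebra.single g (k * (χ (.ofAdd g))⁻¹), ?_⟩
        rw [hφs, mul_assoc, inv_mul_cancel₀ (hχ0 _), mul_one]
    have hker : ∀ a ∈ I, φ.toRingHom a = 0 := by
      have : I ≤ RingHom.ker φ.toRingHom := by
        rw [hI, Ideal.span_le]
        rintro _ ⟨i, rfl⟩
        change φ _ = 0
        rw [map_sub, hφs, hπC, hχ, one_mul, AlgHom.commutes, sub_eq_zero]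
        simp
      exact fun a ha => this ha
    exact (aux_lower K (α - r)).trans (ringKrullDim_le_of_surjective
      (Ideal.Quotient.lift I φ.toRingHom hker)
      (Ideal.Quotient.lift_surjective_of_surjective _ _ hφ))
end

section
/- Let K be an algebraically closed field of characteristic 0, let 1 ≤ r ≤ α, let C = (c_{ij}) be an r × α matrix of integers whose rows are linearly independent over ℤ, let b ∈ (Kˣ)^r, and let V₂ = { y ∈ (Kˣ)^α : ∏_{j=1}^{α} y_j^{c_{ij}} = b_i for all i = 1, …, r }. Let 0 ≤ β < α and suppose there is a nonzero polynomial q ∈ K[z_1, …, z_{β+1}] such that q(y_1, …, y_{β+1}) = 0 for every y ∈ V₂ (i.e., the first β + 1 coordinate functions are algebraically dependent on V₂). Then there exists an integer tuple λ = (λ_1, …, λ_r), not all zero, such that the vector d ∈ ℤ^α defined by d_j = ∑_{i=1}^{r} λ_i c_{ij} is nonzero and satisfies d_j = 0 for all j > β + 1. -/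
theorem units_baer_aux (K : Type*) [Field K] [IsAlgClosed K] [CharZero K] :
    Module.Baer ℤ (Additive Kˣ) := by
  have H : ∀ {n : ℕ}, n ≠ 0 → Function.Surjective (fun a => a ^ n : Kˣ → Kˣ) := by
    intro n hn a
    obtain ⟨z, hz⟩ := IsAlgClosed.exists_pow_nat_eq (a : K) (Nat.pos_of_ne_zero hn)
    have hz0 : z ≠ 0 := by
      rintro rfl
      rw [zero_pow hn] at hz
      exact a.ne_zero hz.symm
    exact ⟨Units.mk0 z hz0, by ext; simpa using hz⟩
  let _ : RootableBy Kˣ ℕ := rootableByOfPowLeftSurj _ _ H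
  let _ : RootableBy Kˣ ℤ := Group.rootableByIntOfRootableByNat Kˣ
  let _ : DivisibleBy (Additive Kˣ) ℤ :=
    { div := fun a n => Additive.ofMul (RootableBy.root a.toMul n)
      div_zero := fun a => by
        rw [RootableBy.root_zero]; rfl
      div_cancel := fun {n} a hn => by
        rw [← ofMul_zpow, RootableBy.root_cancel _ hn]; rfl }
  exact Module.Baer.of_divisible _



theorem algebraic_dependence_gives_multiplicative_relation
    (K : Type*) [Field K] [IsAlgClosed K] [CharZero K]
    (r α : ℕ) (hr : 1 ≤ r) (hrα : r ≤ α)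
    (C : Fin r → Fin α → ℤ) (hC : LinearIndependent ℤ C)
    (b : Fin r → Kˣ)
    (β : ℕ) (hβ : β < α)
    (q : MvPolynomial (Fin (β + 1)) K) (hq : q ≠ 0)
    (hdep : ∀ y : Fin α → Kˣ, (∀ i : Fin r, ∏ j : Fin α, y j ^ C i j = b i) →
      MvPolynomial.eval (fun j : Fin (β + 1) => (y (Fin.castLE hβ j) : K)) q = 0) :
    ∃ lam : Fin r → ℤ, lam ≠ 0 ∧
      (fun j : Fin α => ∑ i : Fin r, lam i * C i j) ≠ 0 ∧
      ∀ j : Fin α, β + 1 ≤ (j : ℕ) → ∑ i : Fin r, lam i * C i j = 0 := by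
  classical
  by_contra hcon
  apply hq
  have hCi := Fintype.linearIndependent_iff.mp hC
  -- the only relation is trivial
  have key : ∀ lam : Fin r → ℤ,
      (∀ j : Fin α, β + 1 ≤ (j : ℕ) → ∑ i : Fin r, lam i * C i j = 0) → lam = 0 := by
    intro lam h
    by_contra h0
    refine hcon ⟨lam, h0, fun hd => h0 ?_, h⟩
    funext i
    refine hCi lam ?_ i
    funext j
    simpa [Finset.sum_apply] using congrFun hd j
  let v : Fin r ⊕ Fin (β + 1) → (Fin α → ℤ) :=
    Sum.elim C (fun j => Pi.single (Fin.castLE hβ j) 1)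
  have hv : LinearIndependent ℤ v := by
    rw [Fintype.linearIndependent_iff]
    intro g hg
    have hg' : ∀ j : Fin α, ∑ i : Fin r, g (Sum.inl i) * C i j +
        ∑ k : Fin (β + 1), g (Sum.inr k) * (Pi.single (Fin.castLE hβ k) (1 : ℤ) : Fin α → ℤ) j
          = 0 := by
      intro j
      simpa [v, Finset.sum_apply, Fintype.sum_sum_type] using congrFun hg j
    have hl : (fun i => g (Sum.inl i)) = 0 := by
      apply key
      intro j hj
      have := hg' j
      rwa [Finset.sum_eq_zero (s := (Finset.univ : Finset (Fin (β + 1)))), add_zero] at this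
      intro k _
      rw [Pi.single_eq_of_ne, mul_zero]
      intro h
      have := congrArg Fin.val h
      simp at this
      omega
    have hl' : ∀ i, g (Sum.inl i) = 0 := fun i => congrFun hl i
    rintro (i | k)
    · exact hl' i
    · have := hg' (Fin.castLE hβ k)
      rw [Finset.sum_eq_single k] at this
      · simpa [hl'] using this
      · intro k' _ hk
        rw [Pi.single_eq_of_ne, mul_zero]
        intro h
        exact hk (Fin.castLE_injective hβ h).symm
      · simp
  have hinj := hv.fintypeLinearCombination_injective
  -- vanishing at all unit points
  have hunit : ∀ x : Fin (β + 1) → Kˣ, MvPolynomial.eval (fun j => (x j : K)) q = 0 := by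
    intro x
    let w : Fin r ⊕ Fin (β + 1) → Additive Kˣ :=
      Sum.elim (fun i => Additive.ofMul (b i)) (fun j => Additive.ofMul (x j))
    obtain ⟨h, hh⟩ := (units_baer_aux K).extension_property
      (Fintype.linearCombination ℤ v) hinj (Fintype.linearCombination ℤ w)
    have hvw : ∀ s, h (v s) = w s := by
      intro s
      have := LinearMap.congr_fun hh (Pi.single s 1)
      simpa [Fintype.linearCombination_apply_single] using this
    let y : Fin α → Kˣ := fun j => (h (Pi.single j 1)).toMul
    have hy := hdep y (by
      intro i
      have h1 : h (C i) = Additive.ofMul (b i) := hvw (Sum.inl i)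
      have h2 : C i = ∑ j, C i j • (Pi.single j (1 : ℤ) : Fin α → ℤ) := by
        funext k
        simp [Finset.sum_apply, Pi.single_apply]
      rw [h2, map_sum] at h1
      simp only [map_zsmul] at h1
      have h3 := congrArg Additive.toMul h1
      simpa [toMul_sum, y] using h3)
    have hyx : ∀ j, y (Fin.castLE hβ j) = x j := by
      intro j
      exact congrArg Additive.toMul (hvw (Sum.inr j))
    simpa [hyx] using hy
  have hprod : q * ∏ j : Fin (β + 1), MvPolynomial.X j = 0 := by
    apply MvPolynomial.funext
    intro x
    rw [map_mul, map_prod, map_zero]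
    by_cases hx : ∃ j, x j = 0
    · obtain ⟨j, hj⟩ := hx
      rw [Finset.prod_eq_zero (Finset.mem_univ j) (by simpa using hj), mul_zero]
    · push Not at hx
      have := hunit (fun j => Units.mk0 (x j) (hx j))
      simp only [Units.val_mk0] at this
      rw [this, zero_mul]
  rcases mul_eq_zero.mp hprod with h | h
  · exact h
  · exact absurd h (Finset.prod_ne_zero_iff.mpr fun j _ => MvPolynomial.X_ne_zero j)
end

section
/- Let p be an exponential polynomial in one variable over ℂ whose zero set { z ∈ ℂ : p(z) = 0 } is finite and nonempty, say equal to {a_1, …, a_m} with the a_i distinct. Then there exist positive integers n_1, …, n_m and an exponential polynomial g in one variable over ℂ such that p(z) = (z − a_1)^{n_1} ⋯ (z − a_m)^{n_m} · exp(g(z)) for all z ∈ ℂ. -/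
/-- `IsExpPoly₁ p` says that `p : ℂ → ℂ` belongs to the smallest subring of the ring of
functions `ℂ → ℂ` containing all constant functions and the identity function, and closed
under post-composition with the complex exponential. -/
inductive IsExpPoly₁ : (ℂ → ℂ) → Prop
  | const (c : ℂ) : IsExpPoly₁ (fun _ => c)
  | id : IsExpPoly₁ (fun z => z)
  | add {f g : ℂ → ℂ} : IsExpPoly₁ f → IsExpPoly₁ g → IsExpPoly₁ (f + g)
  | neg {f : ℂ → ℂ} : IsExpPoly₁ f → IsExpPoly₁ (-f)
  | mul {f g : ℂ → ℂ} : IsExpPoly₁ f → IsExpPoly₁ g → IsExpPoly₁ (f * g)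
  | exp {f : ℂ → ℂ} : IsExpPoly₁ f → IsExpPoly₁ (fun z => Complex.exp (f z))


namespace ExpPolyAux

/-- Growth classes of real functions: level 0 is `O(log)`, each level exponentiates. -/
def Bd : ℕ → (ℝ → ℝ) → Prop
  | 0, φ => ∃ C : ℝ, ∀ r, 0 ≤ r → φ r ≤ C * (1 + Real.log (1 + r))
  | k + 1, φ => ∃ ψ, Bd k ψ ∧ ∀ r, 0 ≤ r → φ r ≤ Real.exp (ψ r)

lemma Bd.mono {k : ℕ} {φ ψ : ℝ → ℝ} (h : Bd k φ) (hle : ∀ r, 0 ≤ r → ψ r ≤ φ r) : Bd k ψ := by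
  cases k with
  | zero => obtain ⟨C, hC⟩ := h; exact ⟨C, fun r hr => (hle r hr).trans (hC r hr)⟩
  | succ k => obtain ⟨C, hB, hC⟩ := h; exact ⟨C, hB, fun r hr => (hle r hr).trans (hC r hr)⟩

lemma Bd.nonneg_maj {k : ℕ} {φ : ℝ → ℝ} (h : Bd k φ) :
    ∃ ψ, Bd k ψ ∧ ∀ r, 0 ≤ r → φ r ≤ ψ r ∧ 0 ≤ ψ r := by
  cases k with
  | zero =>
    obtain ⟨C, hC⟩ := h
    refine ⟨fun r => |C| * (1 + Real.log (1 + r)), ⟨|C|, fun r hr => le_rfl⟩, fun r hr => ?_⟩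
    have h1 : 0 ≤ 1 + Real.log (1 + r) := by
      have := Real.log_nonneg (show (1 : ℝ) ≤ 1 + r by linarith)
      linarith
    exact ⟨(hC r hr).trans (mul_le_mul_of_nonneg_right (le_abs_self C) h1),
      mul_nonneg (abs_nonneg C) h1⟩
  | succ k =>
    obtain ⟨C, hB, hC⟩ := h
    exact ⟨fun r => Real.exp (C r), ⟨C, hB, fun r hr => le_rfl⟩,
      fun r hr => ⟨hC r hr, (Real.exp_pos _).le⟩⟩

lemma Bd.const (k : ℕ) (c : ℝ) : Bd k (fun _ => c) := by
  induction k generalizing c with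
  | zero =>
    refine ⟨|c|, fun r hr => ?_⟩
    have := Real.log_nonneg (show (1 : ℝ) ≤ 1 + r by linarith)
    nlinarith [le_abs_self c, abs_nonneg c]
  | succ k ih =>
    exact ⟨fun _ => c, ih c, fun r _ => by linarith [Real.add_one_le_exp c]⟩

lemma Bd.add {k : ℕ} {φ ψ : ℝ → ℝ} (h : Bd k φ) (h' : Bd k ψ) : Bd k (fun r => φ r + ψ r) := by
  induction k generalizing φ ψ with
  | zero =>
    obtain ⟨C, hC⟩ := h
    obtain ⟨D, hD⟩ := h'
    exact ⟨C + D, fun r hr => by rw [add_mul]; exact add_le_add (hC r hr) (hD r hr)⟩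
  | succ k ih =>
    obtain ⟨C, hB, hC⟩ := h
    obtain ⟨D, hB', hD⟩ := h'
    obtain ⟨C', hC1, hC2⟩ := hB.nonneg_maj
    obtain ⟨D', hD1, hD2⟩ := hB'.nonneg_maj
    refine ⟨fun r => C' r + D' r + 1, ih (ih hC1 hD1) (Bd.const k 1), fun r hr => ?_⟩
    have e1 : Real.exp (C r) ≤ Real.exp (C' r + D' r) :=
      Real.exp_le_exp.2 (by linarith [(hC2 r hr).1, (hD2 r hr).2])
    have e2 : Real.exp (D r) ≤ Real.exp (C' r + D' r) :=
      Real.exp_le_exp.2 (by linarith [(hD2 r hr).1, (hC2 r hr).2])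
    have e3 : (2 : ℝ) ≤ Real.exp 1 := by linarith [Real.add_one_le_exp 1]
    rw [Real.exp_add _ 1]
    nlinarith [hC r hr, hD r hr, Real.exp_pos (C' r + D' r)]

lemma Bd.mul {k : ℕ} {φ ψ : ℝ → ℝ} (h : Bd (k+1) φ) (h' : Bd (k+1) ψ)
    (h0 : ∀ r, 0 ≤ r → 0 ≤ ψ r) : Bd (k+1) (fun r => φ r * ψ r) := by
  obtain ⟨C, hB, hC⟩ := h
  obtain ⟨D, hB', hD⟩ := h'
  refine ⟨fun r => C r + D r, hB.add hB', fun r hr => ?_⟩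
  rw [Real.exp_add]
  exact mul_le_mul (hC r hr) (hD r hr) (h0 r hr) (Real.exp_pos _).le

lemma Bd.succ {k : ℕ} {φ : ℝ → ℝ} (h : Bd k φ) : Bd (k+1) φ :=
  ⟨φ, h, fun r _ => by linarith [Real.add_one_le_exp (φ r)]⟩

lemma Bd.dil {k : ℕ} {φ : ℝ → ℝ} (h : Bd k φ) : Bd k (fun r => φ (2 * r + 1)) := by
  induction k generalizing φ with
  | zero =>
    obtain ⟨C, hC⟩ := h
    refine ⟨|C| * 2, fun r hr => (hC _ (by linarith)).trans ?_⟩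
    have e : Real.log (1 + (2 * r + 1)) = Real.log 2 + Real.log (1 + r) := by
      rw [← Real.log_mul (by norm_num) (by linarith)]; congr 1; ring
    have := Real.log_nonneg (show (1 : ℝ) ≤ 1 + r by linarith)
    have h2 := Real.log_two_lt_d9
    have h3 := Real.log_two_gt_d9
    rw [e]
    have : C * (1 + (Real.log 2 + Real.log (1 + r))) ≤ |C| * (1 + (Real.log 2 + Real.log (1 + r))) :=
      mul_le_mul_of_nonneg_right (le_abs_self C) (by linarith)
    refine this.trans ?_
    rw [mul_assoc]
    exact mul_le_mul_of_nonneg_left (by linarith) (abs_nonneg C)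
  | succ k ih =>
    obtain ⟨C, hB, hC⟩ := h
    exact ⟨_, ih hB, fun r hr => hC _ (by linarith)⟩

/-- Entire functions of growth level `k`. -/
def S (k : ℕ) (f : ℂ → ℂ) : Prop :=
  Differentiable ℂ f ∧ ∃ φ, Bd k φ ∧ ∀ r, 0 ≤ r → ∀ z : ℂ, ‖z‖ ≤ r → ‖f z‖ ≤ φ r

lemma S.const (k : ℕ) (c : ℂ) : S k (fun _ => c) :=
  ⟨differentiable_const c, fun _ => ‖c‖, Bd.const k _, fun _ _ _ _ => le_rfl⟩

lemma S.add {k : ℕ} {f g : ℂ → ℂ} (hf : S k f) (hg : S k g) : S k (f + g) := by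
  obtain ⟨hf, φ, h1, h2⟩ := hf
  obtain ⟨hg, ψ, h3, h4⟩ := hg
  exact ⟨hf.add hg, _, h1.add h3, fun r hr z hz =>
    (norm_add_le _ _).trans (add_le_add (h2 r hr z hz) (h4 r hr z hz))⟩

lemma S.neg {k : ℕ} {f : ℂ → ℂ} (hf : S k f) : S k (-f) := by
  obtain ⟨hf, φ, h1, h2⟩ := hf
  exact ⟨hf.neg, φ, h1, fun r hr z hz => by simpa using h2 r hr z hz⟩

lemma S.sub {k : ℕ} {f g : ℂ → ℂ} (hf : S k f) (hg : S k g) : S k (f - g) := by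
  rw [sub_eq_add_neg]; exact hf.add hg.neg

lemma S.mul {k : ℕ} {f g : ℂ → ℂ} (hf : S (k+1) f) (hg : S (k+1) g) : S (k+1) (f * g) := by
  obtain ⟨hf, φ, h1, h2⟩ := hf
  obtain ⟨hg, ψ, h3, h4⟩ := hg
  have p1 : ∀ r, 0 ≤ r → 0 ≤ φ r := fun r hr => (norm_nonneg _).trans (h2 r hr 0 (by simpa))
  have p2 : ∀ r, 0 ≤ r → 0 ≤ ψ r := fun r hr => (norm_nonneg _).trans (h4 r hr 0 (by simpa))
  refine ⟨hf.mul hg, _, h1.mul h3 p2, fun r hr z hz => ?_⟩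
  rw [Pi.mul_apply, norm_mul]
  exact mul_le_mul (h2 r hr z hz) (h4 r hr z hz) (norm_nonneg _) (p1 r hr)

lemma S.succ {k : ℕ} {f : ℂ → ℂ} (hf : S k f) : S (k+1) f := by
  obtain ⟨hf, φ, h1, h2⟩ := hf
  exact ⟨hf, φ, h1.succ, h2⟩

lemma S.id : S 1 (fun z => z) := by
  refine ⟨differentiable_id, fun r => r, ⟨fun r => 1 * (1 + Real.log (1 + r)),
    ⟨1, fun _ _ => le_rfl⟩, fun r hr => ?_⟩, fun r hr z hz => hz⟩
  show r ≤ Real.exp (1 * (1 + Real.log (1 + r)))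
  rw [one_mul, Real.exp_add, Real.exp_log (by linarith)]
  nlinarith [Real.add_one_le_exp (1:ℝ)]

lemma S.exp {k : ℕ} {f : ℂ → ℂ} (hf : S k f) : S (k+1) (fun z => Complex.exp (f z)) := by
  obtain ⟨hf, φ, h1, h2⟩ := hf
  refine ⟨hf.cexp, fun r => Real.exp (φ r), ⟨φ, h1, fun _ _ => le_rfl⟩, fun r hr z hz => ?_⟩
  rw [Complex.norm_exp]
  exact Real.exp_le_exp.2 ((Complex.re_le_norm _).trans (h2 r hr z hz))

lemma S.deriv {k : ℕ} {f : ℂ → ℂ} (hf : S k f) : S k (deriv f) := by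
  obtain ⟨hf, φ, h1, h2⟩ := hf
  refine ⟨hf.deriv, _, h1.dil, fun r hr z hz => ?_⟩
  have := Complex.norm_deriv_le_of_forall_mem_sphere_norm_le (c := z) (R := 1)
    (C := φ (2 * r + 1)) (f := f) one_pos hf.diffContOnCl (fun w hw => ?_)
  · simpa using this
  · apply h2 _ (by linarith)
    have : ‖w - z‖ = 1 := by simpa [dist_eq_norm] using hw
    have := norm_le_norm_sub_add w z
    linarith

lemma S.zero_const {f : ℂ → ℂ} (hf : S 0 f) : ∃ c, f = fun _ => c := by
  obtain ⟨hf, φ, ⟨C, hC⟩, h2⟩ := hf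
  refine ⟨f 0, funext fun z => is_const_of_deriv_eq_zero hf (fun w => ?_) z 0⟩
  rw [← norm_eq_zero]
  refine le_antisymm ?_ (norm_nonneg _)
  have key : ∀ R : ℝ, 0 < R → ‖_root_.deriv f w‖ ≤ C * (1 + Real.log (1 + (‖w‖ + R))) / R := by
    intro R hR
    refine Complex.norm_deriv_le_of_forall_mem_sphere_norm_le hR hf.diffContOnCl (fun v hv => ?_)
    refine (h2 (‖w‖ + R) (by positivity) v ?_).trans (hC _ (by positivity))
    have : ‖v - w‖ = R := by simpa [dist_eq_norm] using hv
    have := norm_le_norm_sub_add v w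
    linarith
  have lim : Filter.Tendsto (fun R : ℝ => C * (1 + Real.log (1 + (‖w‖ + R))) / R) Filter.atTop
      (nhds 0) := by
    have e1 : (fun R : ℝ => Real.log (1 + (‖w‖ + R))) =o[Filter.atTop] (fun R : ℝ => R) := by
      have t : Filter.Tendsto (fun R : ℝ => 1 + (‖w‖ + R)) Filter.atTop Filter.atTop :=
        Filter.tendsto_atTop_add_const_left _ _
          (Filter.tendsto_atTop_add_const_left _ _ Filter.tendsto_id)
      have := Real.isLittleO_log_id_atTop.comp_tendsto t
      refine this.trans_isBigO ?_
      have o : ∀ c : ℝ, (fun _ : ℝ => c) =O[Filter.atTop] (fun R : ℝ => R) := fun c =>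
        (Asymptotics.isLittleO_const_id_atTop c).isBigO
      exact (o 1).add ((o _).add (Asymptotics.isBigO_refl _ _))
    have e2 : (fun R : ℝ => C * (1 + Real.log (1 + (‖w‖ + R)))) =o[Filter.atTop] (fun R : ℝ => R) :=
      ((Asymptotics.isLittleO_const_id_atTop (1:ℝ)).add e1).const_mul_left C
    exact e2.tendsto_div_nhds_zero
  exact ge_of_tendsto lim (Filter.eventually_atTop.2 ⟨1, fun R hR => key R (by linarith)⟩)

open ValueDistribution Real Complex in
lemma prox_exp_le {u v g : ℂ → ℂ} (hu : Differentiable ℂ u) (hv : Differentiable ℂ v)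
    (hv0 : v ≠ 0) (h : ∀ z, v z * Complex.exp (g z) = u z)
    {R : ℝ} (hR : 1 ≤ R) :
    circleAverage (fun z => max 0 (g z).re) 0 R ≤
      proximity u ⊤ R + proximity v ⊤ R - Real.log ‖meromorphicTrailingCoeffAt v 0‖ := by
  obtain ⟨x, hx⟩ : ∃ x, v x ≠ 0 := by
    by_contra hc; push Not at hc; exact hv0 (funext hc)
  have hum : Meromorphic u := fun z => (hu.analyticAt z).meromorphicAt
  have hvm : Meromorphic v := fun z => (hv.analyticAt z).meromorphicAt
  have hcod : (fun z => Complex.exp (g z)) =ᶠ[Filter.codiscrete ℂ] u * v⁻¹ := by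
    have := AnalyticOnNhd.preimage_zero_mem_codiscrete (f := v) (fun z _ => hv.analyticAt z) hx
    filter_upwards [this] with z hz
    have hz : v z ≠ 0 := by simpa using hz
    simp only [Pi.mul_apply, Pi.inv_apply, ← h z]
    field_simp
  have e1 : proximity (fun z => Complex.exp (g z)) ⊤ R =
      circleAverage (fun z => max 0 (g z).re) 0 R := by
    rw [proximity_top]
    congr 1
    funext z
    simp [Real.posLog, Complex.norm_exp]
  have e2 := proximity_congr_codiscrete (a := ⊤) hcod (show R ≠ 0 by linarith)
  have e3 := proximity_mul_top_le hum hvm.inv R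
  have e4 := characteristic_sub_characteristic_inv_of_ne_zero hvm (show R ≠ 0 by linarith)
  have e5 : logCounting v ⊤ = 0 := by
    have := logCounting_add_analyticOn (f := (0 : ℂ → ℂ)) (g := v)
      (fun z => analyticAt_const.meromorphicAt)
      (hv.differentiableOn.analyticOn isOpen_univ)
    simpa using this
  have e6 : 0 ≤ logCounting v⁻¹ ⊤ R := logCounting_nonneg hR
  simp only [characteristic, Pi.add_apply, e5, Pi.zero_apply] at e4
  simp only [Pi.add_apply] at e3
  linarith

open Real Complex in
lemma re_le_circleAverage {g : ℂ → ℂ} (hg : Differentiable ℂ g) {r : ℝ} (hr : 0 ≤ r) {w : ℂ}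
    (hw : ‖w‖ ≤ r) :
    (g w).re ≤ 3 * circleAverage (fun z => max 0 (g z).re) 0 (2 * r + 1) := by
  have hR : 0 < 2 * r + 1 := by linarith
  have hwb : w ∈ Metric.ball (0 : ℂ) (2 * r + 1) := by simp; linarith
  have hharm : InnerProductSpace.HarmonicOnNhd (fun z => (g z).re)
      (Metric.closedBall 0 (2 * r + 1)) := fun z _ => (hg.analyticAt z).harmonicAt_re
  have hP := hharm.circleAverage_re_herglotzRieszKernel_smul hwb
  have hc : Continuous (fun z => max 0 (g z).re) :=
    continuous_const.max (Complex.continuous_re.comp hg.continuous)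
  have hK := continuousOn_herglotzRieszKernel_sphere hwb
  rw [abs_of_pos hR] at hK
  have hKr : ContinuousOn (re ∘ herglotzRieszKernel 0 w) (Metric.sphere 0 (2 * r + 1)) :=
    Complex.continuous_re.comp_continuousOn hK
  rw [← hP, ← smul_eq_mul (a := (3:ℝ)), ← circleAverage_fun_smul]
  apply circleAverage_mono
  · apply ContinuousOn.circleIntegrable hR.le
    exact hKr.smul (Complex.continuous_re.comp hg.continuous).continuousOn
  · have hc3 : Continuous (fun z => (3:ℝ) • max 0 (g z).re) := by fun_prop
    exact hc3.continuousOn.circleIntegrable hR.le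
  · intro x hx
    rw [abs_of_pos hR] at hx
    have u1 := re_herglotzRieszKernel_le hx hwb
    have u2 := le_re_herglotzRieszKernel hx hwb
    simp only [sub_zero] at u1 u2
    simp only [Pi.smul_apply', Function.comp_apply, herglotzRieszKernel_def, smul_eq_mul, sub_zero]
    set κ := ((x + w) / (x - w)).re
    have k0 : 0 ≤ κ := le_trans (div_nonneg (by linarith) (by positivity)) u2
    have k3 : κ ≤ 3 := u1.trans (by rw [div_le_iff₀ (by linarith)]; linarith)
    have m1 := le_max_right 0 (g x).re
    have m0 := le_max_left 0 (g x).re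
    calc κ * (g x).re ≤ κ * max 0 (g x).re := by gcongr
      _ ≤ 3 * max 0 (g x).re := by gcongr

open ValueDistribution Real Complex in
lemma prox_le {u : ℂ → ℂ} (hu : Differentiable ℂ u) {R M : ℝ} (hR : 0 ≤ R) (hM : 0 ≤ M)
    (h : ∀ z, ‖z‖ ≤ R → ‖u z‖ ≤ Real.exp M) : proximity u ⊤ R ≤ M := by
  rw [proximity_top]
  apply circleAverage_mono_on_of_le_circle
  · apply MeromorphicOn.circleIntegrable_posLog_norm
    exact fun z _ => (hu.analyticAt z).meromorphicAt
  · intro x hx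
    rw [abs_of_nonneg hR] at hx
    have h1 := h x (by simpa using hx.le)
    rw [Real.posLog]
    refine max_le hM ?_
    by_cases h0 : ‖u x‖ = 0
    · rw [h0]; simpa using hM
    · rw [Real.log_le_iff_le_exp (lt_of_le_of_ne (norm_nonneg _) (Ne.symm h0))]; exact h1

lemma S.quot {k : ℕ} {u v g : ℂ → ℂ} (hu : S (k+1) u) (hv : S (k+1) v)
    (hg : Differentiable ℂ g) (hv0 : v ≠ 0) (h : ∀ z, v z * Complex.exp (g z) = u z) : S k g := by
  obtain ⟨hu, φ, ⟨φ', hφ', h1⟩, h2⟩ := hu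
  obtain ⟨hv, ψ, ⟨ψ', hψ', h3⟩, h4⟩ := hv
  obtain ⟨a, ha, ha'⟩ := hφ'.nonneg_maj
  obtain ⟨b, hb, hb'⟩ := hψ'.nonneg_maj
  set c : ℝ := |Real.log ‖meromorphicTrailingCoeffAt v 0‖| with hc
  have key : ∀ r, 0 ≤ r → ∀ w : ℂ, ‖w‖ ≤ r →
      (g w).re ≤ 3 * (a (2 * r + 1) + b (2 * r + 1) + c) := by
    intro r hr w hw
    have hR : 0 ≤ 2 * r + 1 := by linarith
    refine (re_le_circleAverage hg hr hw).trans ?_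
    have p1 := prox_le hu hR (ha' _ hR).2 (fun z hz => (h2 _ hR z hz).trans
      ((h1 _ hR).trans (Real.exp_le_exp.2 (ha' _ hR).1)))
    have p2 := prox_le hv hR (hb' _ hR).2 (fun z hz => (h4 _ hR z hz).trans
      ((h3 _ hR).trans (Real.exp_le_exp.2 (hb' _ hR).1)))
    have p3 := prox_exp_le hu hv hv0 h (R := 2 * r + 1) (by linarith)
    have := neg_abs_le (Real.log ‖meromorphicTrailingCoeffAt v 0‖)
    linarith
  set A : ℝ → ℝ := fun r => a (2 * r + 1) + b (2 * r + 1) + c with hA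
  have hAB : Bd k A := (ha.dil.add hb.dil).add (Bd.const k c)
  have hA0 : ∀ r, 0 ≤ r → 0 ≤ A r := fun r hr => by
    have := (ha' (2 * r + 1) (by linarith)).2
    have := (hb' (2 * r + 1) (by linarith)).2
    have := abs_nonneg (Real.log ‖meromorphicTrailingCoeffAt v 0‖)
    simp only [hA]; linarith
  have h3A : Bd k (fun r => A r + A r + A r + 1) := ((hAB.add hAB).add hAB).add (Bd.const k 1)
  set B : ℝ → ℝ := fun r => A r + A r + A r + 1 with hB
  refine ⟨hg, _, (h3A.dil.add h3A.dil).add (Bd.const k (3 * ‖g 0‖)), fun r hr z hz => ?_⟩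
  have hR : 0 ≤ 2 * r + 1 := by linarith
  have hBpos : 0 < B (2 * r + 1) := by
    have := hA0 _ hR
    simp only [hB]; linarith
  have bc := Complex.borelCaratheodory (f := g) (R := 2 * r + 1) (z := z) hBpos hg.differentiableOn
    (fun w hw => ?_) (by linarith) (by simp; linarith)
  · refine bc.trans (add_le_add ?_ ?_)
    · rw [div_le_iff₀ (by linarith)]
      nlinarith [norm_nonneg z]
    · rw [div_le_iff₀ (by linarith)]
      nlinarith [norm_nonneg z, norm_nonneg (g 0)]
  · have hw' : ‖w‖ ≤ 2 * r + 1 := by simpa using (Metric.mem_ball.1 hw).le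
    have := key _ hR w hw'
    show (g w).re ≤ B (2 * r + 1)
    simp only [hB, hA]; linarith

/-- Composition with the exponential. -/
noncomputable def ex (f : ℂ → ℂ) : ℂ → ℂ := fun z => Complex.exp (f z)

lemma ex_add (f g : ℂ → ℂ) : ex (f + g) = ex f * ex g := by
  funext z; simp [ex, Complex.exp_add]

lemma ex_zero : ex 0 = 1 := by funext z; simp [ex]

lemma ex_ne (f : ℂ → ℂ) (z : ℂ) : ex f z ≠ 0 := Complex.exp_ne_zero _

/-- The filtration of exponential polynomials by height. -/
noncomputable def E : ℕ → Subring (ℂ → ℂ)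
  | 0 => (Pi.constRingHom ℂ ℂ).range
  | k + 1 => Subring.closure (((E k : Set (ℂ → ℂ)) ∪ {fun z => z}) ∪ ex '' (E k : Set (ℂ → ℂ)))

lemma E_succ (k : ℕ) : E (k+1) =
    Subring.closure (((E k : Set (ℂ → ℂ)) ∪ {fun z => z}) ∪ ex '' (E k : Set (ℂ → ℂ))) := rfl

lemma E_le_succ (k : ℕ) : E k ≤ E (k+1) := fun f hf => by
  rw [E_succ]; exact Subring.subset_closure (Or.inl (Or.inl hf))

lemma E_mono : Monotone E := monotone_nat_of_le_succ E_le_succ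

lemma E_id (k : ℕ) : (fun z => z) ∈ E (k+1) := by
  rw [E_succ]; exact Subring.subset_closure (Or.inl (Or.inr rfl))

lemma E_ex {k : ℕ} {f : ℂ → ℂ} (hf : f ∈ E k) : ex f ∈ E (k+1) := by
  rw [E_succ]; exact Subring.subset_closure (Or.inr ⟨f, hf, rfl⟩)

lemma E_const (k : ℕ) (c : ℂ) : (fun _ => c) ∈ E k :=
  E_mono (Nat.zero_le k) ⟨c, rfl⟩

lemma E_S {k : ℕ} {f : ℂ → ℂ} (hf : f ∈ E k) : S k f := by
  induction k generalizing f with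
  | zero => obtain ⟨c, rfl⟩ := hf; exact S.const 0 c
  | succ k ih =>
    rw [E_succ] at hf
    induction hf using Subring.closure_induction with
    | mem x hx =>
      rcases hx with (hx | hx) | ⟨y, hy, rfl⟩
      · exact (ih hx).succ
      · rw [hx]
        have : ∀ k, S (k+1) (fun z => z) := fun k => by
          induction k with
          | zero => exact S.id
          | succ k ih => exact ih.succ
        exact this k
      · exact (ih hy).exp
    | zero => exact S.const _ 0
    | one => exact S.const _ 1
    | add x y _ _ hx hy => exact hx.add hy
    | neg x _ hx => exact hx.neg
    | mul x y _ _ hx hy => exact hx.mul hy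

lemma E_isExp {k : ℕ} {f : ℂ → ℂ} (hf : f ∈ E k) : IsExpPoly₁ f := by
  induction k generalizing f with
  | zero => obtain ⟨c, rfl⟩ := hf; exact IsExpPoly₁.const c
  | succ k ih =>
    rw [E_succ] at hf
    induction hf using Subring.closure_induction with
    | mem x hx =>
      rcases hx with (hx | hx) | ⟨y, hy, rfl⟩
      · exact ih hx
      · rw [hx]; exact IsExpPoly₁.id
      · exact (ih hy).exp
    | zero => exact IsExpPoly₁.const 0
    | one => exact IsExpPoly₁.const 1
    | add x y _ _ hx hy => exact hx.add hy
    | neg x _ hx => exact hx.neg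
    | mul x y _ _ hx hy => exact hx.mul hy

lemma isExp_E {f : ℂ → ℂ} (hf : IsExpPoly₁ f) : ∃ k, f ∈ E k := by
  induction hf with
  | const c => exact ⟨0, E_const 0 c⟩
  | id => exact ⟨1, E_id 0⟩
  | add _ _ h1 h2 =>
    obtain ⟨k, hk⟩ := h1
    obtain ⟨l, hl⟩ := h2
    exact ⟨max k l, add_mem (E_mono (le_max_left k l) hk) (E_mono (le_max_right k l) hl)⟩
  | neg _ h1 => obtain ⟨k, hk⟩ := h1; exact ⟨k, neg_mem hk⟩
  | mul _ _ h1 h2 =>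
    obtain ⟨k, hk⟩ := h1
    obtain ⟨l, hl⟩ := h2
    exact ⟨max k l, mul_mem (E_mono (le_max_left k l) hk) (E_mono (le_max_right k l) hl)⟩
  | exp _ h1 => obtain ⟨k, hk⟩ := h1; exact ⟨k + 1, E_ex hk⟩

lemma mono_form {k : ℕ} {x : ℂ → ℂ}
    (hx : x ∈ Submonoid.closure (((E (k+1) : Set (ℂ → ℂ)) ∪ {fun z => z}) ∪
      ex '' (E (k+1) : Set (ℂ → ℂ)))) :
    ∃ q ∈ E (k+1), ∃ f ∈ E (k+1), x = q * ex f := by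
  induction hx using Submonoid.closure_induction with
  | mem x hx =>
    rcases hx with (hx | hx) | ⟨y, hy, rfl⟩
    · exact ⟨x, hx, 0, zero_mem _, by rw [ex_zero, mul_one]⟩
    · rw [hx]; exact ⟨_, E_id k, 0, zero_mem _, by rw [ex_zero, mul_one]⟩
    · exact ⟨1, one_mem _, y, hy, by rw [one_mul]⟩
  | one => exact ⟨1, one_mem _, 0, zero_mem _, by rw [ex_zero, mul_one]⟩
  | mul x y _ _ hx hy =>
    obtain ⟨q, hq, f, hf, rfl⟩ := hx
    obtain ⟨q', hq', f', hf', rfl⟩ := hy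
    exact ⟨q * q', mul_mem hq hq', f + f', add_mem hf hf', by rw [ex_add]; ring⟩

lemma rep_aux {k : ℕ} {p : ℂ → ℂ} (hp : p ∈ E (k+2)) :
    ∃ c : ((ℂ → ℂ) ⧸ (E k).toAddSubgroup) →₀ (ℂ → ℂ), (∀ x, c x ∈ E (k+1)) ∧
      (∀ x ∈ c.support, x.out ∈ E (k+1)) ∧ p = c.sum (fun x q => q * ex x.out) := by
  classical
  rw [E_succ, Subring.mem_closure_iff] at hp
  induction hp using AddSubgroup.closure_induction with
  | mem x hx =>
    obtain ⟨q, hq, f, hf, rfl⟩ := mono_form hx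
    set X : (ℂ → ℂ) ⧸ (E k).toAddSubgroup := QuotientAddGroup.mk f with hX
    have hd : f - X.out ∈ E k := by
      have h1 : (QuotientAddGroup.mk X.out : (ℂ → ℂ) ⧸ (E k).toAddSubgroup) = QuotientAddGroup.mk f :=
        X.out_eq'
      have h2 := QuotientAddGroup.eq.1 h1
      have h3 : -X.out + f ∈ E k := h2
      rwa [neg_add_eq_sub] at h3
    have hout : X.out ∈ E (k+1) := by
      have := sub_mem hf (E_le_succ k hd)
      simpa using this
    refine ⟨Finsupp.single X (q * ex (f - X.out)), fun x => ?_, fun x hx => ?_, ?_⟩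
    · rw [Finsupp.single_apply]
      split_ifs
      · exact mul_mem hq (E_ex hd)
      · exact zero_mem _
    · have := Finsupp.support_single_subset hx
      rw [Finset.mem_singleton.1 this]; exact hout
    · rw [Finsupp.sum_single_index (by simp), mul_assoc, ← ex_add, sub_add_cancel]
  | zero => exact ⟨0, fun x => zero_mem _, by simp, by simp⟩
  | add x y _ _ hx hy =>
    obtain ⟨c, h1, h2, rfl⟩ := hx
    obtain ⟨d, h3, h4, rfl⟩ := hy
    refine ⟨c + d, fun x => add_mem (h1 x) (h3 x), fun x hx => ?_, ?_⟩
    · rcases Finset.mem_union.1 (Finsupp.support_add hx) with h | h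
      · exact h2 x h
      · exact h4 x h
    · rw [Finsupp.sum_add_index' (by simp) (fun _ _ _ => add_mul _ _ _)]
  | neg x _ hx =>
    obtain ⟨c, h1, h2, rfl⟩ := hx
    refine ⟨-c, fun x => neg_mem (h1 x), fun x hx => h2 x (by simpa using hx), ?_⟩
    rw [Finsupp.sum_neg_index (by simp), Finsupp.sum, Finsupp.sum, ← Finset.sum_neg_distrib]
    simp

lemma rep {k : ℕ} {p : ℂ → ℂ} (hp : p ∈ E (k+2)) :
    ∃ (ι : Type) (s : Finset ι) (q f : ι → ℂ → ℂ),
      (∀ x ∈ s, q x ∈ E (k+1)) ∧ (∀ x ∈ s, f x ∈ E (k+1)) ∧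
      (∀ x ∈ s, ∀ y ∈ s, x ≠ y → f x - f y ∉ E k) ∧ p = ∑ x ∈ s, q x * ex (f x) := by
  obtain ⟨c, h1, h2, h3⟩ := rep_aux hp
  refine ⟨_, c.support, c, fun x => x.out, fun x _ => h1 x, h2, fun x _ y _ hxy hm => hxy ?_, h3⟩
  rw [← x.out_eq', ← y.out_eq']
  symm
  refine QuotientAddGroup.eq.2 ?_
  show -y.out + x.out ∈ E k
  rwa [neg_add_eq_sub]

lemma wronskian {u v : ℂ → ℂ} (hu : Differentiable ℂ u) (hv : Differentiable ℂ v) (hv0 : v ≠ 0)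
    (h : ∀ z, deriv u z * v z = u z * deriv v z) : ∃ c : ℂ, ∀ z, u z = c * v z := by
  obtain ⟨x, hx⟩ : ∃ x, v x ≠ 0 := by
    by_contra hc; push Not at hc; exact hv0 (funext hc)
  obtain ⟨ε, hε, hb⟩ := Metric.eventually_nhds_iff_ball.1 (hv.continuous.continuousAt.eventually_ne hx)
  refine ⟨u x / v x, ?_⟩
  have hd : DifferentiableOn ℂ (fun z => u z / v z) (Metric.ball x ε) := fun z hz =>
    ((hu z).div (hv z) (hb z hz)).differentiableWithinAt
  have hcst : ∀ z ∈ Metric.ball x ε, u z / v z = u x / v x := by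
    intro z hz
    refine Metric.isOpen_ball.is_const_of_deriv_eq_zero (convex_ball x ε).isPreconnected hd
      (fun w hw => ?_) hz (Metric.mem_ball_self hε)
    have := ((hu w).hasDerivAt.div (hv w).hasDerivAt (hb w hw)).deriv
    have e : (fun z => u z / v z) = u / v := rfl
    rw [e, this, h w]; simp
  have hA : AnalyticOnNhd ℂ u Set.univ := fun z _ => hu.analyticAt z
  have hB : AnalyticOnNhd ℂ (fun z => u x / v x * v z) Set.univ := fun z _ =>
    (hv.const_mul (u x / v x)).analyticAt z
  have := hA.eq_of_eventuallyEq hB (z₀ := x) (by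
    filter_upwards [Metric.ball_mem_nhds x hε] with z hz
    rw [← hcst z hz, div_mul_cancel₀ _ (hb z hz)])
  exact fun z => congrFun this z

lemma deriv_mul_ex {q f : ℂ → ℂ} (hq : Differentiable ℂ q) (hf : Differentiable ℂ f) (z : ℂ) :
    HasDerivAt (q * ex f) ((deriv q z + q z * deriv f z) * ex f z) z := by
  have h2 : HasDerivAt (ex f) (ex f z * deriv f z) z := (hf z).hasDerivAt.cexp
  have e : (deriv q z + q z * deriv f z) * ex f z =
      deriv q z * ex f z + q z * (ex f z * deriv f z) := by ring
  rw [e]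
  exact (hq z).hasDerivAt.mul h2

lemma indep {k : ℕ} (star : ∀ g ∈ E (k+1), S k g → g ∈ E k) {ι : Type*} (s : Finset ι) :
    ∀ (f a : ι → ℂ → ℂ), (∀ i ∈ s, f i ∈ E (k+1)) →
      (∀ i ∈ s, ∀ j ∈ s, i ≠ j → f i - f j ∉ E k) → (∀ i ∈ s, S (k+1) (a i)) →
      (∑ i ∈ s, a i * ex (f i) = 0) → ∀ i ∈ s, a i = 0 := by
  classical
  induction s using Finset.induction_on with
  | empty => simp
  | insert j s hj ih =>
    intro f a hf hne ha hsum
    by_cases haj : a j = 0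
    · rw [Finset.sum_insert hj, haj, zero_mul, zero_add] at hsum
      have := ih f a (fun i hi => hf i (Finset.mem_insert_of_mem hi))
        (fun i hi l hl => hne i (Finset.mem_insert_of_mem hi) l (Finset.mem_insert_of_mem hl))
        (fun i hi => ha i (Finset.mem_insert_of_mem hi)) hsum
      intro i hi
      rcases Finset.mem_insert.1 hi with rfl | hi
      · exact haj
      · exact this i hi
    exfalso
    set g : ι → ℂ → ℂ := fun i => f i - f j with hg
    have hsj := ha j (Finset.mem_insert_self j s)
    have has : ∀ i ∈ s, S (k+1) (a i) := fun i hi => ha i (Finset.mem_insert_of_mem hi)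
    have hgE : ∀ i ∈ s, g i ∈ E (k+1) := fun i hi =>
      sub_mem (hf i (Finset.mem_insert_of_mem hi)) (hf j (Finset.mem_insert_self j s))
    have hgS : ∀ i ∈ s, S (k+1) (g i) := fun i hi => E_S (hgE i hi)
    have hrel : ∑ i ∈ s, a i * ex (g i) = - a j := by
      have e1 : (∑ i ∈ s, a i * ex (g i)) * ex (f j) = ∑ i ∈ s, a i * ex (f i) := by
        rw [Finset.sum_mul]
        refine Finset.sum_congr rfl fun i _ => ?_
        rw [mul_assoc, ← ex_add]; simp [hg]
      rw [Finset.sum_insert hj, ← e1, ← add_mul] at hsum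
      funext z
      have := congrFun hsum z
      simp only [Pi.mul_apply, Pi.add_apply, Pi.zero_apply, mul_eq_zero, ex_ne, or_false] at this
      rw [Pi.neg_apply]
      linear_combination this
    have hder : ∀ z, ∑ i ∈ s, (deriv (a i) z + a i z * deriv (g i) z) * ex (g i) z
        = - deriv (a j) z := by
      intro z
      have h1 : HasDerivAt (∑ i ∈ s, a i * ex (g i))
          (∑ i ∈ s, (deriv (a i) z + a i z * deriv (g i) z) * ex (g i) z) z :=
        HasDerivAt.sum fun i hi => deriv_mul_ex (has i hi).1 (hgS i hi).1 z
      rw [hrel] at h1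
      exact h1.unique (hsj.1 z).hasDerivAt.neg
    have hb := ih g (fun i => a j * (deriv (a i) + a i * deriv (g i)) - deriv (a j) * a i) hgE
      (fun i hi l hl hil => by
        have := hne i (Finset.mem_insert_of_mem hi) l (Finset.mem_insert_of_mem hl) hil
        simpa [hg] using this)
      (fun i hi => (hsj.mul ((has i hi).deriv.add ((has i hi).mul (hgS i hi).deriv))).sub
        (hsj.deriv.mul (has i hi)))
      (by
        funext z
        have e1 := hder z
        have e2 := congrFun hrel z
        simp only [Finset.sum_apply, Pi.mul_apply, Pi.neg_apply] at e2
        simp only [Finset.sum_apply, Pi.mul_apply, Pi.sub_apply, Pi.add_apply, Pi.zero_apply,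
          sub_mul, Finset.sum_sub_distrib, mul_assoc, ← Finset.mul_sum]
        rw [e2]
        rw [e1]; ring)
    have hall : ∀ i ∈ s, a i = 0 := by
      intro i hi
      by_contra hai
      have hw := wronskian (u := a i * ex (g i)) (v := a j)
        (fun z => (deriv_mul_ex (has i hi).1 (hgS i hi).1 z).differentiableAt) hsj.1 haj
        (fun z => by
          rw [(deriv_mul_ex (has i hi).1 (hgS i hi).1 z).deriv]
          have := congrFun (hb i hi) z
          simp only [Pi.mul_apply, Pi.sub_apply, Pi.add_apply, Pi.zero_apply] at this
          simp only [Pi.mul_apply]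
          linear_combination ex (g i) z * this)
      obtain ⟨c, hc⟩ := hw
      have hS : S k (g i) := S.quot (u := (fun _ => c) * a j) (v := a i)
        ((S.const (k+1) c).mul hsj) (has i hi) (hgS i hi).1 hai (fun z => hc z)
      exact hne i (Finset.mem_insert_of_mem hi) j (Finset.mem_insert_self j s)
        (fun h => hj (h ▸ hi)) (star _ (hgE i hi) hS)
    apply haj
    have : ∑ i ∈ s, a i * ex (g i) = 0 := Finset.sum_eq_zero fun i hi => by
      rw [hall i hi, zero_mul]
    rw [this] at hrel
    exact neg_eq_zero.1 hrel.symm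

lemma star (k : ℕ) : ∀ g ∈ E (k+1), S k g → g ∈ E k := by
  classical
  induction k with
  | zero => intro g _ hg; obtain ⟨c, rfl⟩ := hg.zero_const; exact E_const 0 c
  | succ k ih =>
    intro p hp hS
    obtain ⟨ι, s, q, f, hq, hf, hne, hsum⟩ := rep hp
    by_cases hx : ∃ x ∈ s, f x ∈ E k
    · obtain ⟨x, hxs, hx⟩ := hx
      have hex : ex (-f x) ∈ E (k+1) := E_ex (neg_mem hx)
      have hcancel : ex (-f x) * ex (f x) = 1 := by rw [← ex_add]; simp [ex_zero]
      have := indep ih s f (fun y => if y = x then q x - p * ex (-f x) else q y) hf hne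
        (fun y hy => by
          split_ifs
          · exact (E_S (hq x hxs)).sub (hS.mul (E_S hex))
          · exact E_S (hq y hy))
        (by
          rw [← Finset.add_sum_erase s _ hxs] at hsum ⊢
          rw [if_pos rfl, Finset.sum_congr rfl (g := fun y => q y * ex (f y))]
          · rw [sub_mul, mul_assoc, hcancel]
            linear_combination -hsum
          · intro y hy; rw [if_neg (Finset.ne_of_mem_erase hy)]) x hxs
      simp only [if_true] at this
      have e : p = q x * ex (f x) := by
        linear_combination (-ex (f x)) * this - p * hcancel
      rw [e]
      exact mul_mem (hq x hxs) (E_ex hx)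
    · push Not at hx
      have := indep ih (Finset.insertNone s) (fun o => o.elim 0 f) (fun o => o.elim p (fun y => - q y))
        (by
          intro o ho
          cases o with
          | none => exact zero_mem _
          | some y => exact hf y (by simpa using ho))
        (by
          intro o ho o' ho' hoo
          cases o with
          | none =>
            cases o' with
            | none => exact absurd rfl hoo
            | some y =>
              intro h
              exact hx y (by simpa using ho') (by simpa using h)
          | some x =>
            cases o' with
            | none =>
              intro h
              exact hx x (by simpa using ho) (by simpa using h)
            | some y => exact hne x (by simpa using ho) y (by simpa using ho') (by simpa using hoo))
        (by
          intro o ho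
          cases o with
          | none => exact hS
          | some y => exact (E_S (hq y (by simpa using ho))).neg)
        (by
          rw [Finset.sum_insertNone]
          simp only [Option.elim, ex_zero, mul_one, neg_mul, Finset.sum_neg_distrib]
          rw [hsum]; ring) none (by simp)
      have e : p = 0 := this
      rw [e]; exact zero_mem _

lemma main_aux (k : ℕ) : ∀ p ∈ E (k+1), ∀ P : ℂ → ℂ, S 1 P → P ≠ 0 → ∀ h : ℂ → ℂ,
    Differentiable ℂ h → (∀ z, P z * Complex.exp (h z) = p z) → IsExpPoly₁ h := by
  have Sup : ∀ (f : ℂ → ℂ), S 1 f → ∀ k, S (k+1) f := fun f hf k => by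
    induction k with
    | zero => exact hf
    | succ k ih => exact ih.succ
  induction k with
  | zero =>
    intro p hp P hP hP0 h hh heq
    obtain ⟨c, rfl⟩ := (S.quot (E_S hp) hP hh hP0 heq).zero_const
    exact IsExpPoly₁.const c
  | succ k ih =>
    intro p hp P hP hP0 h hh heq
    have hS : S (k+1) h := S.quot (E_S hp) (Sup P hP (k+1)) hh hP0 heq
    have hPS := Sup P hP k
    obtain ⟨ι, s, q, f, hq, hf, hne, hsum⟩ := rep hp
    have hpe : p = P * ex h := funext fun z => (heq z).symm
    have hp0 : p ≠ 0 := by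
      intro h0
      apply hP0
      funext z
      have := heq z
      rw [h0] at this
      simpa using this
    have hdp : ∀ z, ∑ x ∈ s, (deriv (q x) z + q x z * deriv (f x) z) * ex (f x) z
        = (deriv P z + P z * deriv h z) * ex h z := by
      intro z
      have h1 : HasDerivAt (∑ x ∈ s, q x * ex (f x))
          (∑ x ∈ s, (deriv (q x) z + q x z * deriv (f x) z) * ex (f x) z) z :=
        HasDerivAt.sum fun x hx => deriv_mul_ex (E_S (hq x hx)).1 (E_S (hf x hx)).1 z
      rw [← hsum, hpe] at h1
      exact h1.unique (deriv_mul_ex hP.1 hh z)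
    have hb := indep (star k) s f
      (fun x => P * (deriv (q x) + q x * deriv (f x)) - (deriv P + P * deriv h) * q x) hf hne
      (fun x hx => (hPS.mul ((E_S (hq x hx)).deriv.add ((E_S (hq x hx)).mul
        (E_S (hf x hx)).deriv))).sub ((hPS.deriv.add (hPS.mul hS.deriv)).mul (E_S (hq x hx))))
      (by
        funext z
        have e1 := hdp z
        have e2 := congrFun (hpe.symm.trans hsum) z
        simp only [Finset.sum_apply, Pi.mul_apply] at e2
        simp only [Finset.sum_apply, Pi.mul_apply, Pi.sub_apply, Pi.add_apply, Pi.zero_apply,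
          sub_mul, Finset.sum_sub_distrib, mul_assoc, ← Finset.mul_sum]
        rw [e1, ← e2]; ring)
    obtain ⟨x, hx, hx0⟩ : ∃ x ∈ s, q x * ex (f x) ≠ 0 := by
      by_contra hc
      push Not at hc
      exact hp0 (hsum.trans (Finset.sum_eq_zero hc))
    have hdq := fun z => deriv_mul_ex (E_S (hq x hx)).1 (E_S (hf x hx)).1 z
    have hdh := fun z => deriv_mul_ex hP.1 hh z
    obtain ⟨c, hc⟩ := wronskian (u := q x * ex (f x)) (v := P * ex h)
      (fun z => (hdq z).differentiableAt) (fun z => (hdh z).differentiableAt) (hpe ▸ hp0)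
      (fun z => by
        rw [(hdq z).deriv, (hdh z).deriv]
        have := congrFun (hb x hx) z
        simp only [Pi.mul_apply, Pi.sub_apply, Pi.add_apply, Pi.zero_apply] at this
        simp only [Pi.mul_apply]
        linear_combination ex (f x) z * ex h z * this)
    have hc0 : c ≠ 0 := by
      rintro rfl
      exact hx0 (funext fun z => by simpa using hc z)
    have key := ih (q x) (hq x hx) ((fun _ => c) * P) ((S.const 1 c).mul hP)
      (by
        intro h0
        apply hP0
        funext z
        have := congrFun h0 z
        simpa [hc0] using this)
      (h - f x) (hh.sub (E_S (hf x hx)).1)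
      (fun z => by
        have := hc z
        simp only [Pi.mul_apply, ex] at this
        simp only [Pi.mul_apply, Pi.sub_apply, Complex.exp_sub]
        field_simp
        linear_combination -this)
    have := key.add (E_isExp (hf x hx))
    rwa [sub_add_cancel] at this

lemma factor_one {f : ℂ → ℂ} (hf : Differentiable ℂ f) (hf0 : f ≠ 0) (a : ℂ) :
    ∃ (n : ℕ) (g : ℂ → ℂ), Differentiable ℂ g ∧ g a ≠ 0 ∧ ∀ z, f z = (z - a) ^ n * g z := by
  have hfin : analyticOrderAt f a ≠ ⊤ := by
    intro h
    exact hf0 ((AnalyticOnNhd.analyticOrderAt_eq_top_iff_eq_zero a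
      (fun z => hf.analyticAt z)).1 h)
  obtain ⟨g, hg, hga, hev⟩ := (hf.analyticAt a).analyticOrderAt_ne_top.1 hfin
  set n := analyticOrderNatAt f a
  classical
  set G : ℂ → ℂ := fun z => if z = a then g a else f z / (z - a) ^ n with hG
  have hGg : G =ᶠ[nhds a] g := by
    filter_upwards [hev] with z hz
    by_cases hza : z = a
    · simp [hG, hza]
    · have : z - a ≠ 0 := sub_ne_zero.2 hza
      simp only [hG, if_neg hza, hz, smul_eq_mul]
      field_simp
  refine ⟨n, G, fun z => ?_, by simpa [hG] using hga, fun z => ?_⟩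
  · by_cases hza : z = a
    · rw [hza]; exact hg.differentiableAt.congr_of_eventuallyEq hGg
    · have h1 : G =ᶠ[nhds z] fun z => f z / (z - a) ^ n := by
        filter_upwards [eventually_ne_nhds hza] with w hw
        simp [hG, hw]
      refine DifferentiableAt.congr_of_eventuallyEq ?_ h1
      exact (hf z).div (by fun_prop) (pow_ne_zero _ (sub_ne_zero.2 hza))
  · by_cases hza : z = a
    · have := hev.self_of_nhds
      rw [hza, this]; simp [hG]
    · have : z - a ≠ 0 := sub_ne_zero.2 hza
      simp only [hG, if_neg hza]
      field_simp

lemma factor_many {ι : Type*} (s : Finset ι) (a : ι → ℂ) (ha : Function.Injective a) {f : ℂ → ℂ}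
    (hf : Differentiable ℂ f) (hf0 : f ≠ 0) :
    ∃ (n : ι → ℕ) (g : ℂ → ℂ), Differentiable ℂ g ∧ (∀ i ∈ s, g (a i) ≠ 0) ∧
      ∀ z, f z = (∏ i ∈ s, (z - a i) ^ n i) * g z := by
  classical
  induction s using Finset.induction_on with
  | empty => exact ⟨fun _ => 0, f, hf, by simp, by simp⟩
  | insert j s hj ih =>
    obtain ⟨n, g, hg, hne, heq⟩ := ih
    have hg0 : g ≠ 0 := by
      rintro rfl
      exact hf0 (funext fun z => by simp [heq z])
    obtain ⟨m, G, hG, hGa, hGe⟩ := factor_one hg hg0 (a j)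
    refine ⟨Function.update n j m, G, hG, fun i hi => ?_, fun z => ?_⟩
    · rcases Finset.mem_insert.1 hi with rfl | hi
      · exact hGa
      · intro h0
        apply hne i hi
        rw [hGe, h0, mul_zero]
    · have e : ∏ i ∈ s, (z - a i) ^ Function.update n j m i = ∏ i ∈ s, (z - a i) ^ n i := by
        refine Finset.prod_congr rfl fun i hi => ?_
        have hij : i ≠ j := fun h => hj (h ▸ hi)
        rw [Function.update_of_ne hij]
      rw [Finset.prod_insert hj, Function.update_self, heq z, hGe z, e]
      ring

lemma exists_log {g : ℂ → ℂ} (hg : Differentiable ℂ g) (h0 : ∀ z, g z ≠ 0) :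
    ∃ h : ℂ → ℂ, Differentiable ℂ h ∧ ∀ z, g z = Complex.exp (h z) := by
  have hd : Differentiable ℂ (fun z => deriv g z / g z) := fun z => (hg.deriv z).div (hg z) (h0 z)
  obtain ⟨L, hL0, hL⟩ := hd.isExactOn_univ.with_val_at 0 (Complex.log (g 0))
  have hLd : Differentiable ℂ L := fun z => (hL z trivial).differentiableAt
  refine ⟨L, hLd, fun z => ?_⟩
  obtain ⟨c, hc⟩ := wronskian (u := g) (v := fun z => Complex.exp (L z)) hg hLd.cexp
    (fun h => Complex.exp_ne_zero _ (congrFun h 0)) (fun z => by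
      rw [(hL z trivial).cexp.deriv]
      have := h0 z
      field_simp)
  have h1 := hc 0
  rw [hL0, Complex.exp_log (h0 0)] at h1
  have hc1 : c = 1 := by
    have := h0 0
    field_simp at h1
    exact h1.symm
  rw [hc z, hc1, one_mul]

lemma S_prod {ι : Type*} (s : Finset ι) (a : ι → ℂ) (n : ι → ℕ) :
    S 1 (fun z => ∏ i ∈ s, (z - a i) ^ n i) := by
  have h : (fun z => ∏ i ∈ s, (z - a i) ^ n i) ∈ E 1 := by
    have e : (fun z => ∏ i ∈ s, (z - a i) ^ n i) =
        ∏ i ∈ s, ((fun z : ℂ => z) - (fun _ => a i)) ^ n i := by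
      funext z; simp [Finset.prod_apply]
    rw [e]
    exact prod_mem fun i _ => pow_mem (sub_mem (E_id 0) (E_const 1 _)) _
  exact E_S h

end ExpPolyAux

open ExpPolyAux in
theorem expPoly_finitely_many_zeros (p : ℂ → ℂ) (hp : IsExpPoly₁ p)
    (m : ℕ) (hm : 0 < m) (a : Fin m → ℂ) (ha : Function.Injective a)
    (hzeros : {z : ℂ | p z = 0} = Set.range a) :
    ∃ n : Fin m → ℕ, (∀ i, 0 < n i) ∧
      ∃ g : ℂ → ℂ, IsExpPoly₁ g ∧
        ∀ z : ℂ, p z = (∏ i : Fin m, (z - a i) ^ n i) * Complex.exp (g z) := by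
  obtain ⟨k, hk⟩ := isExp_E hp
  have hk1 := E_le_succ k hk
  have hpd : Differentiable ℂ p := (E_S hk).1
  have hp0 : p ≠ 0 := by
    intro h0
    have h1 : (Set.range a).Finite := Set.finite_range a
    rw [← hzeros, h0] at h1
    have h2 : {z : ℂ | (0 : ℂ → ℂ) z = 0} = Set.univ := by ext; simp
    rw [h2] at h1
    exact Set.infinite_univ h1
  obtain ⟨n, G, hG, hne, heq⟩ := factor_many Finset.univ a ha hpd hp0
  have hG0 : ∀ z, G z ≠ 0 := by
    intro z hz
    have : z ∈ Set.range a := by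
      rw [← hzeros]; show p z = 0; rw [heq, hz, mul_zero]
    obtain ⟨i, rfl⟩ := this
    exact hne i (Finset.mem_univ i) hz
  obtain ⟨h, hh, hexp⟩ := exists_log hG hG0
  refine ⟨n, fun i => Nat.pos_of_ne_zero fun hni => ?_, h, ?_, fun z => by rw [heq z, hexp z]⟩
  · have hz : p (a i) = 0 := by
      have : a i ∈ {z : ℂ | p z = 0} := by rw [hzeros]; exact ⟨i, rfl⟩
      exact this
    rw [heq (a i)] at hz
    rcases mul_eq_zero.1 hz with hz | hz
    · obtain ⟨j, _, hj⟩ := Finset.prod_eq_zero_iff.1 hz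
      by_cases hji : j = i
      · rw [hji, hni] at hj; simp at hj
      · have : a i - a j = 0 := eq_zero_of_pow_eq_zero hj
        exact hji (ha (sub_eq_zero.1 this)).symm
    · exact hG0 _ hz
  · refine main_aux k p hk1 _ (S_prod Finset.univ a n) ?_ h hh (fun z => ?_)
    · intro h0
      apply hp0
      funext z
      rw [heq z]
      have := congrFun h0 z
      simp only [Pi.zero_apply] at this
      rw [this]; simp
    · rw [heq z, hexp z]
end
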